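/- Let N be a positive integer, δ₀ ∈ (0,1), 0 < s < t < 1 with t − s ≥ δ₀, and m > 0. There exist r₀ > 0, depending only on m, N and δ₀, and c₀ > 0, depending only on N and δ₀, such that: if F is a minimizer for φ(m) and x₀ ∈ ∂^m F, then |B(x₀, r) ∩ F| ≥ c₀·r^N for all r ∈ (0, r₀). -/

import Mathlib

open MeasureTheory ENNReal

/-- Interaction energy `∫_A ∫_B |x-y|^{-(N+α)} dy dx` in `[0,∞]`. -/
noncomputable def interEnergy (N : ℕ) (α : ℝ)
    (A B : Set (EuclideanSpace ℝ (Fin N))) : ℝ≥0∞ :=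
  ∫⁻ x in A, ∫⁻ y in B, ENNReal.ofReal (‖x - y‖ ^ (-((N : ℝ) + α))) ∂volume ∂volume

/-- The fractional `α`-perimeter `P_α(E) = ∫_E ∫_{Eᶜ} |x-y|^{-(N+α)} dy dx`. -/
noncomputable def fracPer (N : ℕ) (α : ℝ) (E : Set (EuclideanSpace ℝ (Fin N))) : ℝ≥0∞ :=
  interEnergy N α E Eᶜ

/-- The free energy `F_{s,t}(E) = (1-t) P_t(E) - s P_s(E)`. -/
noncomputable def freeEnergy (N : ℕ) (s t : ℝ) (E : Set (EuclideanSpace ℝ (Fin N))) : ℝ :=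
  (1 - t) * (fracPer N t E).toReal - s * (fracPer N s E).toReal

/-- The isovolumetric function `φ(m) = inf { F_{s,t}(E) : |E| = m, P_t(E) < ∞ }`. -/
noncomputable def isoFn (N : ℕ) (s t m : ℝ) : ℝ :=
  sInf {x : ℝ | ∃ E : Set (EuclideanSpace ℝ (Fin N)), MeasurableSet E ∧
    volume E = ENNReal.ofReal m ∧ fracPer N t E < ⊤ ∧ x = freeEnergy N s t E}


/-- `F` is a minimizer of the free energy `F_{s,t}` among measurable sets of volume `m`
with finite `t`-perimeter. -/
def IsMinimizer (N : ℕ) (s t m : ℝ) (F : Set (EuclideanSpace ℝ (Fin N))) : Prop :=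
  MeasurableSet F ∧ volume F = ENNReal.ofReal m ∧ fracPer N t F < ⊤ ∧
    ∀ E : Set (EuclideanSpace ℝ (Fin N)), MeasurableSet E →
      volume E = ENNReal.ofReal m → fracPer N t E < ⊤ →
      freeEnergy N s t F ≤ freeEnergy N s t E

/-- The measure-theoretic boundary of a set. -/
def mtBoundary (N : ℕ) (E : Set (EuclideanSpace ℝ (Fin N))) :
    Set (EuclideanSpace ℝ (Fin N)) :=
  {x | ∀ r : ℝ, 0 < r →
    0 < volume (E ∩ Metric.ball x r) ∧ 0 < volume (Metric.ball x r \ E)}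

/-!
Slicing along the difference `h = y - x` gives `P_α(A) = ∫ ‖h‖ ^ (-(N + α)) f(h) dh`, where
`f(h) = |{x ∈ A : x + h ∉ A}|` satisfies `f(h) ≤ 2 f(h / 2)`. Halving the radius of the ball of
integration repeatedly then shows that `(1 - t) P_t(A)` controls the integral of `f` over every
small ball with a constant that does not degenerate as `t → 1`. This yields both the isoperimetric
inequality `(1 - t) P_t(A) ≥ c |A| ^ (1 - t / N)` and the interpolation inequality
`s P_s(A) ≤ (1 - t) P_t(A) / 4 + K |A|`, with constants depending only on `N` and `δ₀`.

Comparing a minimizer `F` with the dilation of `F ∖ B(x₀, ρ)` that restores its volume bounds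
`(1 - t) P_t(F ∩ B(x₀, ρ))` by a multiple of `(1 - t)` times the interaction of `F ∩ B(x₀, ρ)`
with `F ∖ B(x₀, ρ)`, up to an error `Λ |F ∩ B(x₀, ρ)|` that the isoperimetric inequality absorbs
for small `ρ`. Integrating over `ρ ∈ (a, b)`, the function `u(ρ) = |F ∩ B(x₀, ρ)|` satisfies
`(b - a) u(a) ^ (1 - t / N) ≤ M b ^ (1 - t) u(b)`. Were `u(r)` much smaller than `r ^ N`, De Giorgi
iteration along radii decreasing from `r` to `r / 2` would give `u(r / 2) = 0`.
-/

open Filter Metric Module Set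
open scoped Topology Pointwise

section RealEstimates

lemma exists_pos_le_one_forall_rpow_le {γ₀ ε : ℝ} (hγ₀ : 0 < γ₀) (hε : 0 < ε) :
    ∃ c : ℝ, 0 < c ∧ c ≤ 1 ∧ ∀ γ, γ₀ ≤ γ → c ^ γ ≤ ε := by
  have hc : 0 < min 1 (ε ^ γ₀⁻¹) := by positivity
  refine ⟨min 1 (ε ^ γ₀⁻¹), hc, min_le_left _ _, fun γ hγ => ?_⟩
  calc min 1 (ε ^ γ₀⁻¹) ^ γ
      ≤ min 1 (ε ^ γ₀⁻¹) ^ γ₀ := Real.rpow_le_rpow_of_exponent_ge hc (min_le_left _ _) hγ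
    _ ≤ (ε ^ γ₀⁻¹) ^ γ₀ := Real.rpow_le_rpow hc.le (min_le_right _ _) hγ₀.le
    _ = ε := Real.rpow_inv_rpow hε.le hγ₀.ne'

lemma one_sub_two_rpow_neg_le {x : ℝ} (hx : 0 ≤ x) : 1 - (2 : ℝ) ^ (-x) ≤ x := by
  have exp_bound := Real.add_one_le_exp (Real.log 2 * -x)
  rw [Real.rpow_def_of_pos two_pos]
  nlinarith [Real.log_two_lt_d9]

lemma exists_pos_forall_mul_le_mul_rpow {γ₀ a b : ℝ} (hγ₀ : 0 < γ₀) (ha : 0 < a) (hb : 0 < b) :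
    ∃ v₀ : ℝ, 0 < v₀ ∧ ∀ γ, γ₀ ≤ γ → ∀ v, 0 < v → v ≤ v₀ → a * v ≤ b * v ^ (1 - γ) := by
  obtain ⟨v₀, hv₀, -, hsmall⟩ := exists_pos_le_one_forall_rpow_le hγ₀ (div_pos hb ha)
  refine ⟨v₀, hv₀, fun γ hγ v hv hvv₀ => ?_⟩
  have hvγ : a * v ^ γ ≤ b := by
    rw [← le_div_iff₀' ha]
    exact (Real.rpow_le_rpow hv.le hvv₀ (hγ₀.le.trans hγ)).trans (hsmall γ hγ)
  calc a * v = a * v ^ γ * v ^ (1 - γ) := by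
        rw [mul_assoc, ← Real.rpow_add hv, add_sub_cancel, Real.rpow_one]
    _ ≤ b * v ^ (1 - γ) := by gcongr

lemma exists_pos_forall_tendsto_zero_of_rpow_le {γ₀ C : ℝ} (hγ₀ : 0 < γ₀) (hC : 0 < C) :
    ∃ c : ℝ, 0 < c ∧ ∀ γ, γ₀ ≤ γ → γ < 1 → ∀ x : ℕ → ℝ, (∀ k, 0 ≤ x k) → x 0 ≤ c →
      (∀ k, x (k + 1) ^ (1 - γ) ≤ C * 2 ^ k * x k) → Tendsto x atTop (𝓝 0) := by
  obtain ⟨q, hq, hq1, hqγ⟩ := exists_pos_le_one_forall_rpow_le hγ₀ (one_half_pos (α := ℝ))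
  obtain ⟨c, hc, -, hcγ⟩ := exists_pos_le_one_forall_rpow_le hγ₀ (div_pos hq hC)
  have hq_ne : q ≠ 1 := fun h => by
    have := hqγ γ₀ le_rfl
    norm_num [h] at this
  refine ⟨c, hc, fun γ hγ hγ1 x hx hx0 hstep => ?_⟩
  have prefactor_le : ∀ k : ℕ, C * 2 ^ k * (c * q ^ k) ^ γ ≤ q := fun k =>
    calc C * 2 ^ k * (c * q ^ k) ^ γ = C * c ^ γ * (2 * q ^ γ) ^ k := by
          rw [Real.mul_rpow hc.le (by positivity), ← Real.rpow_pow_comm hq.le, mul_pow]; ring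
      _ ≤ C * (q / C) * (2 * (1 / 2)) ^ k := by gcongr <;> simp_all only
      _ = q := by field_simp; simp
  have decay : ∀ k, x k ≤ c * q ^ k := fun k => by
    induction k with
    | zero => simpa using hx0
    | succ k ih =>
      have hck : 0 < c * q ^ k := by positivity
      refine (Real.rpow_le_rpow_iff (hx _) (by positivity) (sub_pos.2 hγ1)).1 ?_
      calc x (k + 1) ^ (1 - γ) ≤ C * 2 ^ k * (c * q ^ k) := (hstep k).trans (by gcongr)
        _ = C * 2 ^ k * (c * q ^ k) ^ γ * (c * q ^ k) ^ (1 - γ) := by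
          rw [mul_assoc (C * 2 ^ k), ← Real.rpow_add hck, add_sub_cancel, Real.rpow_one]
        _ ≤ q * (c * q ^ k) ^ (1 - γ) := by gcongr; exact prefactor_le k
        _ ≤ q ^ (1 - γ) * (c * q ^ k) ^ (1 - γ) := by
          gcongr
          simpa using Real.rpow_le_rpow_of_exponent_ge hq hq1
            (show 1 - γ ≤ 1 by linarith [hγ₀.trans_le hγ])
        _ = (c * q ^ (k + 1)) ^ (1 - γ) := by
          rw [← Real.mul_rpow hq.le hck.le, pow_succ]; ring_nf
  refine squeeze_zero hx decay ?_
  simpa using (tendsto_pow_atTop_nhds_zero_of_lt_one hq.le (hq1.lt_of_ne hq_ne)).const_mul c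

lemma div_pow_rpow_le_of_mul_rpow_le {n : ℕ} (hn : n ≠ 0) {t r M τ v w : ℝ} (hr : 0 < r)
    (hτ : 0 < τ) (hv : 0 ≤ v) (h : τ * r * v ^ (1 - t / n) ≤ M * r ^ (1 - t) * w) :
    (v / r ^ n) ^ (1 - t / n) ≤ M / τ * (w / r ^ n) := by
  have hpow : (r ^ n) ^ (1 - t / n) = r ^ n * r ^ (1 - t) / r := by
    rw [← Real.rpow_natCast, ← Real.rpow_mul hr.le, ← Real.rpow_add hr, ← Real.rpow_sub_one hr.ne']
    congr 1
    field_simp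
    ring
  rw [Real.div_rpow hv (by positivity), hpow, div_le_iff₀ (by positivity)]
  calc v ^ (1 - t / n) = (τ * r)⁻¹ * (τ * r * v ^ (1 - t / n)) := by field_simp
    _ ≤ (τ * r)⁻¹ * (M * r ^ (1 - t) * w) := by gcongr
    _ = M / τ * (w / r ^ n) * (r ^ n * r ^ (1 - t) / r) := by field_simp

lemma exists_seq_decreasing_to_half {r : ℝ} (hr : 0 < r) :
    ∃ ℓ : ℕ → ℝ, ℓ 0 = r ∧ (∀ k, r / 2 ≤ ℓ k) ∧ (∀ k, ℓ k ≤ r) ∧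
      ∀ k, ℓ k - ℓ (k + 1) = (4 * 2 ^ k)⁻¹ * r := by
  refine ⟨fun k => r / 2 + (2 * 2 ^ k)⁻¹ * r, by ring, fun k => ?_, fun k => ?_, fun k => ?_⟩
  · exact le_add_of_nonneg_right (by positivity)
  · have : (2 * 2 ^ k : ℝ)⁻¹ ≤ 2⁻¹ :=
      inv_anti₀ two_pos (le_mul_of_one_le_right two_pos.le (one_le_pow₀ one_le_two))
    nlinarith
  · field_simp
    ring

lemma exists_pos_forall_mul_pow_le_of_growth {n : ℕ} (hn : 0 < n) {δ M : ℝ} (hδ : 0 < δ)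
    (hM : 0 < M) :
    ∃ c : ℝ, 0 < c ∧ ∀ t, δ ≤ t → t < 1 → ∀ r, 0 < r → ∀ u : ℝ → ℝ, Monotone u →
      0 < u (r / 2) →
      (∀ a b, 0 < a → a < b → b ≤ r → (b - a) * u a ^ (1 - t / n) ≤ M * b ^ (1 - t) * u b) →
      c * r ^ n ≤ u r := by
  have hn' : (0 : ℝ) < n := by exact_mod_cast hn
  obtain ⟨c, hc, hzero⟩ := exists_pos_forall_tendsto_zero_of_rpow_le (div_pos hδ hn')
    (mul_pos four_pos hM)
  refine ⟨c, hc, fun t hδt ht r hr u hu hu_pos hgrowth => ?_⟩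
  by_contra! hsmall
  obtain ⟨ℓ, ℓ_zero, half_le_ℓ, ℓ_le, ℓ_sub⟩ := exists_seq_decreasing_to_half hr
  have u_pos : ∀ k, 0 < u (ℓ k) := fun k => hu_pos.trans_le (hu (half_le_ℓ k))
  have step : ∀ k, (u (ℓ (k + 1)) / r ^ n) ^ (1 - t / n) ≤ 4 * M * 2 ^ k * (u (ℓ k) / r ^ n) := by
    intro k
    have ℓ_lt : ℓ (k + 1) < ℓ k := by rw [← sub_pos, ℓ_sub]; positivity
    rw [show 4 * M * 2 ^ k = M / (4 * 2 ^ k)⁻¹ by field_simp]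
    refine div_pow_rpow_le_of_mul_rpow_le hn.ne' hr (by positivity) (u_pos (k + 1)).le ?_
    rw [← ℓ_sub]
    refine (hgrowth _ _ ((half_pos hr).trans_le (half_le_ℓ _)) ℓ_lt (ℓ_le k)).trans ?_
    gcongr
    exacts [(u_pos k).le, (half_pos hr).le.trans (half_le_ℓ k), ℓ_le k]
  have hlim := hzero (t / n) (by gcongr)
    ((div_lt_one hn').2 (ht.trans_le (by exact_mod_cast hn)))
    (fun k => u (ℓ k) / r ^ n) (fun k => div_nonneg (u_pos k).le (by positivity))
    (by simpa only [ℓ_zero] using (div_le_iff₀ (pow_pos hr n)).2 hsmall.le) step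
  refine (div_pos hu_pos (pow_pos hr n)).not_ge (ge_of_tendsto' hlim fun k => ?_)
  gcongr
  exact hu (half_le_ℓ k)

lemma div_sub_le_one_add_two_mul_div {m v : ℝ} (hm : 0 < m) (hv : 0 ≤ v) (hvm : 2 * v ≤ m) :
    m / (m - v) ≤ 1 + 2 * v / m := by
  rw [div_le_iff₀ (by linarith), ← sub_nonneg]
  have : (1 + 2 * v / m) * (m - v) - m = v * (m - 2 * v) / m := by field_simp; ring
  rw [this]
  exact div_nonneg (mul_nonneg hv (sub_nonneg.2 hvm)) hm.le

lemma min_one_sq_mul_rpow_le {n : ℕ} (hn : 0 < n) {w R t : ℝ} (hw : 0 < w) (hR : 0 < R)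
    (ht₀ : 0 ≤ t) (ht₁ : t ≤ 1) :
    min 1 w ^ 2 * (w * R ^ n) ^ (1 - t / n) ≤ R ^ (-((n : ℝ) + t)) * (w * R ^ n) ^ 2 := by
  have hn' : (1 : ℝ) ≤ n := mod_cast hn
  have hv : 0 < w * R ^ n := by positivity
  have hexp : t / n ≤ 1 := (div_le_one (by positivity)).2 (ht₁.trans hn')
  have hmin : min 1 w ^ 2 ≤ w ^ (1 + t / n) :=
    calc min 1 w ^ 2 = min 1 w ^ (2 : ℝ) := (Real.rpow_two _).symm
      _ ≤ min 1 w ^ (1 + t / n) :=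
          Real.rpow_le_rpow_of_exponent_ge (by positivity) (min_le_left _ _) (by linarith)
      _ ≤ w ^ (1 + t / n) := by gcongr; exact min_le_right _ _
  have hpow : R ^ ((n : ℝ) + t) * w ^ (1 + t / n) = (w * R ^ n) ^ (1 + t / n) := by
    rw [Real.mul_rpow hw.le (by positivity), ← Real.rpow_natCast_mul hR.le, mul_add,
      mul_div_cancel₀ _ (by positivity), mul_one, mul_comm]
  calc min 1 w ^ 2 * (w * R ^ n) ^ (1 - t / n)
      ≤ w ^ (1 + t / n) * (w * R ^ n) ^ (1 - t / n) := by gcongr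
    _ = R ^ (-((n : ℝ) + t)) * ((w * R ^ n) ^ (1 + t / n) * (w * R ^ n) ^ (1 - t / n)) := by
        rw [← hpow, Real.rpow_neg hR.le]
        field_simp
    _ = R ^ (-((n : ℝ) + t)) * (w * R ^ n) ^ 2 := by
        rw [← Real.rpow_add hv, ← Real.rpow_two]
        ring_nf

end RealEstimates

section RadialIntegrals

lemma ofReal_one_sub_mul_lintegral_rpow_neg {t : ℝ} (ht : t < 1) {a b : ℝ} (hab : a ≤ b) :
    ENNReal.ofReal (1 - t) * ∫⁻ ρ in Ioc a b, ENNReal.ofReal ((ρ - a) ^ (-t)) =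
      ENNReal.ofReal ((b - a) ^ (1 - t)) := by
  have hint : IntegrableOn (fun ρ => (ρ - a) ^ (-t)) (Ioc a b) := by
    rw [← intervalIntegrable_iff_integrableOn_Ioc_of_le hab]
    simpa using (intervalIntegral.intervalIntegrable_rpow' (a := 0) (b := b - a)
      (neg_lt_neg ht)).comp_sub_right a
  have hnonneg : 0 ≤ᵐ[volume.restrict (Ioc a b)] fun ρ => (ρ - a) ^ (-t) :=
    (ae_restrict_mem measurableSet_Ioc).mono fun ρ hρ => Real.rpow_nonneg (sub_pos.2 hρ.1).le _
  have hvalue : ∫ ρ in Ioc a b, (ρ - a) ^ (-t) = (b - a) ^ (1 - t) / (1 - t) := by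
    rw [← intervalIntegral.integral_of_le hab,
      intervalIntegral.integral_comp_sub_right (fun z => z ^ (-t)),
      integral_rpow (Or.inl (neg_lt_neg ht)), neg_add_eq_sub, sub_self,
      Real.zero_rpow (sub_pos.2 ht).ne', sub_zero]
  rw [← ofReal_integral_eq_lintegral_ofReal hint hnonneg, hvalue,
    ← ENNReal.ofReal_mul (sub_pos.2 ht).le, mul_div_cancel₀ _ (sub_pos.2 ht).ne']

variable {X : Type*} [PseudoMetricSpace X] [MeasurableSpace X] [OpensMeasurableSpace X]

lemma ofReal_one_sub_mul_lintegral_ball_rpow_neg_le (μ : Measure X) [SFinite μ] {t : ℝ}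
    (ht : t < 1) (A : Set X) (x₀ : X) (b : ℝ) :
    ENNReal.ofReal (1 - t) * ∫⁻ ρ in Iic b, ∫⁻ x in A ∩ ball x₀ ρ,
        ENNReal.ofReal ((ρ - dist x x₀) ^ (-t)) ∂μ ≤
      ENNReal.ofReal (b ^ (1 - t)) * μ (A ∩ ball x₀ b) := by
  let f : ℝ → X → ℝ≥0∞ := fun ρ x => ENNReal.ofReal ((ρ - dist x x₀) ^ (-t))
  have inner_eq : ∀ ρ ∈ Iic b, ∫⁻ x in A ∩ ball x₀ ρ, f ρ x ∂μ =
      ∫⁻ x in A ∩ ball x₀ b, (ball x₀ ρ).indicator (f ρ) x ∂μ := fun ρ hρ => by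
    rw [setLIntegral_indicator measurableSet_ball, inter_left_comm,
      inter_eq_left.2 (ball_subset_ball hρ)]
  have swap : ∫⁻ ρ in Iic b, ∫⁻ x in A ∩ ball x₀ ρ, f ρ x ∂μ =
      ∫⁻ x in A ∩ ball x₀ b, (∫⁻ ρ in Ioc (dist x x₀) b, f ρ x) ∂μ := by
    have hdist : Measurable fun p : ℝ × X => dist p.2 x₀ :=
      (continuous_id.dist continuous_const).measurable.comp measurable_snd
    have hf : Measurable (Function.uncurry f) :=
      ((measurable_fst.sub hdist).pow_const (-t)).ennreal_ofReal
    have hmeas : Measurable (Function.uncurry fun ρ x => (ball x₀ ρ).indicator (f ρ) x) :=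
      hf.indicator (measurableSet_lt hdist measurable_fst)
    rw [setLIntegral_congr_fun measurableSet_Iic inner_eq,
      lintegral_lintegral_swap hmeas.aemeasurable]
    exact lintegral_congr fun x => setLIntegral_indicator measurableSet_Ioi fun ρ => f ρ x
  rw [swap, ← lintegral_const_mul' _ _ ENNReal.ofReal_ne_top, ← setLIntegral_const]
  refine setLIntegral_mono measurable_const fun x hx => ?_
  rw [ofReal_one_sub_mul_lintegral_rpow_neg ht (le_of_lt hx.2)]
  gcongr
  exacts [sub_nonneg.2 (le_of_lt hx.2), sub_le_self _ dist_nonneg]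

lemma ofReal_sub_mul_le_of_forall_le_lintegral_ball (μ : Measure X) [SFinite μ] {t k M a b : ℝ}
    (hM : 0 ≤ M) (ht : t < 1) (A : Set X) (x₀ : X) (hab : a ≤ b)
    (hk : ∀ ρ ∈ Ioc a b, ENNReal.ofReal k ≤ ENNReal.ofReal M * (ENNReal.ofReal (1 - t) *
      ∫⁻ x in A ∩ ball x₀ ρ, ENNReal.ofReal ((ρ - dist x x₀) ^ (-t)) ∂μ)) :
    ENNReal.ofReal ((b - a) * k) ≤
      ENNReal.ofReal (M * b ^ (1 - t)) * μ (A ∩ ball x₀ b) := by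
  calc ENNReal.ofReal ((b - a) * k) = ∫⁻ _ in Ioc a b, ENNReal.ofReal k := by
        rw [setLIntegral_const, Real.volume_Ioc, mul_comm,
          ← ENNReal.ofReal_mul' (sub_nonneg.2 hab)]
    _ ≤ ∫⁻ ρ in Ioc a b, ENNReal.ofReal M * (ENNReal.ofReal (1 - t) *
        ∫⁻ x in A ∩ ball x₀ ρ, ENNReal.ofReal ((ρ - dist x x₀) ^ (-t)) ∂μ) :=
        setLIntegral_mono' measurableSet_Ioc hk
    _ = ENNReal.ofReal M * (ENNReal.ofReal (1 - t) * ∫⁻ ρ in Ioc a b,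
        ∫⁻ x in A ∩ ball x₀ ρ, ENNReal.ofReal ((ρ - dist x x₀) ^ (-t)) ∂μ) := by
        rw [lintegral_const_mul' _ _ ENNReal.ofReal_ne_top,
          lintegral_const_mul' _ _ ENNReal.ofReal_ne_top]
    _ ≤ ENNReal.ofReal M * (ENNReal.ofReal (b ^ (1 - t)) * μ (A ∩ ball x₀ b)) := by
        grw [Ioc_subset_Iic_self, ofReal_one_sub_mul_lintegral_ball_rpow_neg_le μ ht A x₀ b]
    _ = _ := by rw [ENNReal.ofReal_mul hM, mul_assoc]

end RadialIntegrals

section FractionalKernel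

variable {E : Type*} [NormedAddCommGroup E] [NormedSpace ℝ E]

/-- The kernel `‖h‖ ^ (-(d + α))` of the fractional `α`-perimeter in dimension `d`. Its value at
`h = 0` is the junk value of `Real.rpow`, which no integral over a nontrivial space sees. -/
noncomputable def fracKernel (α : ℝ) (h : E) : ℝ≥0∞ :=
  ENNReal.ofReal (‖h‖ ^ (-((finrank ℝ E : ℝ) + α)))

lemma fracKernel_smul {c : ℝ} (hc : 0 < c) (α : ℝ) (h : E) :
    fracKernel α (c • h) = ENNReal.ofReal (c ^ (-((finrank ℝ E : ℝ) + α))) * fracKernel α h := by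
  rw [fracKernel, fracKernel, ← ENNReal.ofReal_mul (by positivity), norm_smul,
    Real.norm_of_nonneg hc.le, Real.mul_rpow hc.le (norm_nonneg h)]

lemma fracKernel_mul_ofReal_norm_le (α : ℝ) (h : E) :
    fracKernel α h * ENNReal.ofReal ‖h‖ ≤ fracKernel (α - 1) h := by
  rcases eq_or_ne h 0 with rfl | hh
  · simp
  · rw [fracKernel, fracKernel, ← ENNReal.ofReal_mul (by positivity),
      ← Real.rpow_add_one (norm_ne_zero_iff.2 hh)]
    apply le_of_eq
    ring_nf

lemma fracKernel_le_ofReal_rpow_mul_fracKernel {s t δ R : ℝ} (hδ : 0 ≤ δ) (hst : δ ≤ t - s)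
    {h : E} (h_ne : h ≠ 0) (hR : ‖h‖ ≤ R) (hR1 : R ≤ 1) :
    fracKernel s h ≤ ENNReal.ofReal (R ^ δ) * fracKernel t h := by
  have hh : 0 < ‖h‖ := norm_pos_iff.2 h_ne
  have hpow : ‖h‖ ^ (t - s) ≤ R ^ δ :=
    (Real.rpow_le_rpow_of_exponent_ge hh (hR.trans hR1) hst).trans
      (Real.rpow_le_rpow hh.le hR hδ)
  rw [fracKernel, fracKernel, ← ENNReal.ofReal_mul (Real.rpow_nonneg (hh.le.trans hR) _)]
  apply ENNReal.ofReal_le_ofReal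
  calc ‖h‖ ^ (-((finrank ℝ E : ℝ) + s)) = ‖h‖ ^ (t - s) * ‖h‖ ^ (-((finrank ℝ E : ℝ) + t)) := by
        rw [← Real.rpow_add hh]; ring_nf
    _ ≤ R ^ δ * ‖h‖ ^ (-((finrank ℝ E : ℝ) + t)) := by gcongr

lemma ofReal_rpow_le_fracKernel {α R : ℝ} (hα : 0 ≤ α) {h : E} (h_ne : h ≠ 0) (hR : ‖h‖ ≤ R) :
    ENNReal.ofReal (R ^ (-((finrank ℝ E : ℝ) + α))) ≤ fracKernel α h :=
  ENNReal.ofReal_le_ofReal <| Real.rpow_le_rpow_of_nonpos (norm_pos_iff.2 h_ne) hR <|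
    neg_nonpos.2 (by positivity)

variable [MeasurableSpace E] [BorelSpace E]

lemma measurable_fracKernel (α : ℝ) : Measurable (fracKernel α : E → ℝ≥0∞) := by
  unfold fracKernel
  fun_prop

variable [FiniteDimensional ℝ E] (μ : Measure E) [μ.IsAddHaarMeasure]

lemma setLIntegral_smul_set {c : ℝ} (hc : 0 < c) (f : E → ℝ≥0∞) (A : Set E) :
    ∫⁻ x in c • A, f x ∂μ = ENNReal.ofReal (c ^ finrank ℝ E) * ∫⁻ x in A, f (c • x) ∂μ := by
  have hemb : MeasurableEmbedding (c • · : E → E) :=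
    (MeasurableEquiv.smul₀ c hc.ne').measurableEmbedding
  have hpre : (c • · : E → E) ⁻¹' (c • A) = A := preimage_image_eq A (MulAction.injective₀ hc.ne')
  have hcov : ∫⁻ x in A, f (c • x) ∂μ =
      ENNReal.ofReal (c ^ finrank ℝ E)⁻¹ * ∫⁻ x in c • A, f x ∂μ := by
    calc ∫⁻ x in A, f (c • x) ∂μ = ∫⁻ x in c • A, f x ∂(μ.map (c • ·)) := by
          rw [hemb.restrict_map, hpre, hemb.lintegral_map]
      _ = _ := by
          rw [Measure.map_addHaar_smul μ hc.ne', Measure.restrict_smul, lintegral_smul_measure,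
            abs_of_pos (by positivity), smul_eq_mul]
  rw [hcov, ← mul_assoc, ← ENNReal.ofReal_mul (by positivity), mul_inv_cancel₀ (by positivity),
    ENNReal.ofReal_one, one_mul]

section Polar

variable [Nontrivial E]

lemma lintegral_comp_norm {f : ℝ → ℝ≥0∞} (hf : Measurable f) :
    ∫⁻ x, f ‖x‖ ∂μ = finrank ℝ E * μ (ball 0 1) *
      ∫⁻ y in Ioi (0 : ℝ), ENNReal.ofReal (y ^ (finrank ℝ E - 1)) * f y :=
  calc ∫⁻ x, f ‖x‖ ∂μ = ∫⁻ x : ({0}ᶜ : Set E), f ‖x.1‖ ∂(μ.comap (↑)) := by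
        rw [lintegral_subtype_comap (measurableSet_singleton _).compl fun x => f ‖x‖,
          restrict_compl_singleton]
    _ = ∫⁻ x, f x.2 ∂μ.toSphere.prod (.volumeIoiPow (finrank ℝ E - 1)) := by
        simpa using μ.measurePreserving_homeomorphUnitSphereProd.lintegral_comp_emb
          (Homeomorph.measurableEmbedding _) (f ∘ Subtype.val ∘ Prod.snd)
    _ = μ.toSphere univ * ∫⁻ y : Ioi (0 : ℝ), f y ∂.volumeIoiPow (finrank ℝ E - 1) := by
        rw [lintegral_prod _ (by fun_prop)]
        simp only [lintegral_const, mul_comm]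
    _ = _ := by
        rw [μ.toSphere_apply_univ, Measure.volumeIoiPow,
          lintegral_withDensity_eq_lintegral_mul _ (by fun_prop) (by fun_prop),
          ← lintegral_subtype_comap measurableSet_Ioi]
        rfl

lemma setLIntegral_fracKernel_preimage_norm (α : ℝ) {S : Set ℝ} (hS : MeasurableSet S) :
    ∫⁻ h in norm ⁻¹' S, fracKernel α h ∂μ = finrank ℝ E * μ (ball 0 1) *
      ∫⁻ y in S ∩ Ioi 0, ENNReal.ofReal (y ^ (-1 - α)) := by
  let f : ℝ → ℝ≥0∞ := S.indicator fun y => ENNReal.ofReal (y ^ (-((finrank ℝ E : ℝ) + α)))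
  have hf : Measurable f := Measurable.indicator (by fun_prop) hS
  have radial : ∀ y ∈ Ioi (0 : ℝ), ENNReal.ofReal (y ^ (finrank ℝ E - 1)) * f y =
      S.indicator (fun y => ENNReal.ofReal (y ^ (-1 - α))) y := fun y hy => by
    by_cases hyS : y ∈ S
    · simp only [f, indicator_of_mem hyS]
      rw [← ENNReal.ofReal_mul (pow_nonneg (le_of_lt hy) _), ← Real.rpow_natCast,
        ← Real.rpow_add hy, Nat.cast_pred finrank_pos]
      ring_nf
    · simp [f, hyS]
  calc ∫⁻ h in norm ⁻¹' S, fracKernel α h ∂μ = ∫⁻ h, f ‖h‖ ∂μ := by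
        rw [← lintegral_indicator (measurable_norm hS)]
        rfl
    _ = _ := by
        rw [lintegral_comp_norm μ hf, setLIntegral_congr_fun measurableSet_Ioi radial,
          setLIntegral_indicator hS]

lemma setLIntegral_compl_ball_fracKernel {α r : ℝ} (hα : 0 < α) (hr : 0 < r) :
    ∫⁻ h in (ball 0 r)ᶜ, fracKernel α h ∂μ =
      ENNReal.ofReal (finrank ℝ E * μ.real (ball 0 1) / α * r ^ (-α)) := by
  have hball : (ball (0 : E) r)ᶜ = norm ⁻¹' Ici r := by ext; simp
  have hinter : Ici r ∩ Ioi 0 = Ici r := inter_eq_left.2 (Ici_subset_Ioi.2 hr)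
  have hexp : -1 - α < -1 := by linarith
  have htail : ∫⁻ y in Ici r, ENNReal.ofReal (y ^ (-1 - α)) = ENNReal.ofReal (r ^ (-α) / α) := by
    rw [← setLIntegral_congr Ioi_ae_eq_Ici, ← ofReal_integral_eq_lintegral_ofReal
      (integrableOn_Ioi_rpow_of_lt hexp hr)
      ((ae_restrict_mem measurableSet_Ioi).mono fun y hy => Real.rpow_nonneg (hr.trans hy).le _),
      integral_Ioi_rpow_of_lt hexp hr, show -1 - α + 1 = -α by ring, neg_div_neg_eq]
  rw [hball, setLIntegral_fracKernel_preimage_norm μ α measurableSet_Ici, hinter, htail,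
    ← ofReal_measureReal, ← ENNReal.ofReal_natCast, ← ENNReal.ofReal_mul (by positivity),
    ← ENNReal.ofReal_mul (by positivity)]
  ring_nf

lemma ofReal_one_sub_mul_setLIntegral_closedBall_fracKernel {t R : ℝ} (ht : t < 1) (hR : 0 ≤ R) :
    ENNReal.ofReal (1 - t) * ∫⁻ h in closedBall 0 R, fracKernel (t - 1) h ∂μ =
      ENNReal.ofReal (finrank ℝ E * μ.real (ball 0 1) * R ^ (1 - t)) := by
  have hball : closedBall (0 : E) R = norm ⁻¹' Iic R := by ext; simp
  have hradial := ofReal_one_sub_mul_lintegral_rpow_neg ht hR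
  simp only [sub_zero] at hradial
  rw [hball, setLIntegral_fracKernel_preimage_norm μ _ measurableSet_Iic, inter_comm,
    Ioi_inter_Iic, mul_left_comm, show -1 - (t - 1) = -t by ring, hradial, ← ofReal_measureReal,
    ← ENNReal.ofReal_natCast, ← ENNReal.ofReal_mul (by positivity),
    ← ENNReal.ofReal_mul (by positivity)]

end Polar

end FractionalKernel

section HalfDoubling

variable {E : Type*} [NormedAddCommGroup E] [NormedSpace ℝ E] [FiniteDimensional ℝ E]
  [MeasurableSpace E] [BorelSpace E] (μ : Measure E) [μ.IsAddHaarMeasure]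
  {f : E → ℝ≥0∞}

lemma ofReal_two_rpow_mul_setLIntegral_closedBall_le
    (hf : ∀ h, f h ≤ 2 * f ((2⁻¹ : ℝ) • h)) (t R : ℝ) :
    ENNReal.ofReal (2 ^ (t - 1)) * ∫⁻ h in closedBall 0 R, fracKernel t h * f h ∂μ ≤
      ∫⁻ h in closedBall 0 (R / 2), fracKernel t h * f h ∂μ := by
  have hball : closedBall (0 : E) (R / 2) = (2⁻¹ : ℝ) • closedBall 0 R := by
    rw [smul_closedBall' (by norm_num), smul_zero, norm_inv, Real.norm_ofNat, inv_mul_eq_div]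
  have hconst : ENNReal.ofReal ((2⁻¹ : ℝ) ^ finrank ℝ E) *
      ENNReal.ofReal ((2⁻¹ : ℝ) ^ (-((finrank ℝ E : ℝ) + t))) =
        ENNReal.ofReal (2 ^ (t - 1)) * 2 := by
    rw [← ENNReal.ofReal_ofNat 2, ← ENNReal.ofReal_mul (by positivity),
      ← ENNReal.ofReal_mul (by positivity), ← Real.rpow_natCast, ← Real.rpow_add (by norm_num),
      Real.inv_rpow two_pos.le, ← Real.rpow_neg two_pos.le, ← Real.rpow_add_one two_ne_zero]
    ring_nf
  rw [hball, setLIntegral_smul_set μ (by norm_num),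
    ← lintegral_const_mul' _ _ ENNReal.ofReal_ne_top,
    ← lintegral_const_mul' _ _ ENNReal.ofReal_ne_top]
  refine lintegral_mono fun h => ?_
  calc ENNReal.ofReal (2 ^ (t - 1)) * (fracKernel t h * f h)
      ≤ ENNReal.ofReal (2 ^ (t - 1)) * (fracKernel t h * (2 * f ((2⁻¹ : ℝ) • h))) := by
        gcongr; exact hf h
    _ = (ENNReal.ofReal (2 ^ (t - 1)) * 2) * (fracKernel t h * f ((2⁻¹ : ℝ) • h)) := by ring
    _ = _ := by rw [← hconst, fracKernel_smul (by norm_num)]; ring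

lemma setLIntegral_shell_le
    (hf : ∀ h, f h ≤ 2 * f ((2⁻¹ : ℝ) • h)) {t R : ℝ} (ht : t < 1) (hR : 0 ≤ R) :
    ∫⁻ h in closedBall 0 R \ closedBall 0 (R / 2), fracKernel t h * f h ∂μ ≤
      ENNReal.ofReal (1 - t) * ∫⁻ h, fracKernel t h * f h ∂μ := by
  let I : ℝ → ℝ≥0∞ := fun r => ∫⁻ h in closedBall 0 r, fracKernel t h * f h ∂μ
  have hI : I R ≤ ∫⁻ h, fracKernel t h * f h ∂μ := setLIntegral_le_lintegral _ _
  rcases eq_or_ne (I R) ⊤ with htop | hfin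
  · have htop' : ∫⁻ h, fracKernel t h * f h ∂μ = ⊤ := top_le_iff.1 (htop ▸ hI)
    rw [htop', ENNReal.mul_top (ENNReal.ofReal_pos.2 (sub_pos.2 ht)).ne']
    exact le_top
  have hsplit : (∫⁻ h in closedBall 0 R \ closedBall 0 (R / 2), fracKernel t h * f h ∂μ) +
      ENNReal.ofReal (2 ^ (t - 1)) * I R ≤ I R := by
    have hsub : closedBall (0 : E) (R / 2) ⊆ closedBall 0 R :=
      closedBall_subset_closedBall (half_le_self hR)
    grw [ofReal_two_rpow_mul_setLIntegral_closedBall_le μ hf t R, add_comm]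
    nth_rw 1 [← inter_eq_right.2 hsub]
    exact (lintegral_inter_add_sdiff _ _ measurableSet_closedBall).le
  calc _ ≤ I R - ENNReal.ofReal (2 ^ (t - 1)) * I R :=
        ENNReal.le_sub_of_add_le_right (ENNReal.mul_ne_top ENNReal.ofReal_ne_top hfin) hsplit
    _ = ENNReal.ofReal (1 - 2 ^ (t - 1)) * I R := by
        rw [ENNReal.ofReal_sub _ (by positivity), ENNReal.sub_mul fun _ _ => hfin,
          ENNReal.ofReal_one, one_mul]
    _ ≤ ENNReal.ofReal (1 - t) * ∫⁻ h, fracKernel t h * f h ∂μ := by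
        refine mul_le_mul' (ENNReal.ofReal_le_ofReal ?_) hI
        simpa only [neg_sub] using one_sub_two_rpow_neg_le (sub_nonneg.2 ht.le)

lemma closedBall_sdiff_zero_subset_iUnion_shell {E : Type*} [NormedAddCommGroup E] (R : ℝ) :
    closedBall (0 : E) R \ {0} ⊆
      ⋃ j : ℕ, closedBall 0 (R / 2 ^ j) \ closedBall 0 (R / 2 ^ j / 2) := by
  rintro h ⟨hR, h_ne⟩
  have hh : 0 < ‖h‖ := norm_pos_iff.2 h_ne
  rw [mem_closedBall_zero_iff] at hR
  have hRpos : 0 < R := hh.trans_le hR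
  obtain ⟨j, hj, hj'⟩ := exists_nat_pow_near_of_lt_one (div_pos hh hRpos)
    ((div_le_one hRpos).2 hR) one_half_pos one_half_lt_one
  rw [lt_div_iff₀ hRpos, one_div_pow] at hj
  rw [div_le_iff₀ hRpos, one_div_pow] at hj'
  refine mem_iUnion.2 ⟨j, ?_, ?_⟩
  · rwa [mem_closedBall_zero_iff, div_eq_inv_mul, ← one_div]
  · rwa [mem_closedBall_zero_iff, not_le, div_div, ← pow_succ, div_eq_inv_mul, ← one_div]

lemma setLIntegral_shell_le_ofReal_rpow_mul
    (hf : ∀ h, f h ≤ 2 * f ((2⁻¹ : ℝ) • h)) {s t δ R : ℝ} (hδ : 0 ≤ δ) (hst : δ ≤ t - s)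
    (ht : t < 1) (hR : 0 ≤ R) (hR1 : R ≤ 1) :
    ∫⁻ h in closedBall 0 R \ closedBall 0 (R / 2), fracKernel s h * f h ∂μ ≤
      ENNReal.ofReal (R ^ δ) * (ENNReal.ofReal (1 - t) * ∫⁻ h, fracKernel t h * f h ∂μ) := by
  calc ∫⁻ h in closedBall 0 R \ closedBall 0 (R / 2), fracKernel s h * f h ∂μ
      ≤ ∫⁻ h in closedBall 0 R \ closedBall 0 (R / 2),
          ENNReal.ofReal (R ^ δ) * (fracKernel t h * f h) ∂μ := by
        refine setLIntegral_mono' (measurableSet_closedBall.diff measurableSet_closedBall)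
          fun h hh => ?_
        have h_ne : h ≠ 0 := by
          rintro rfl
          exact hh.2 (mem_closedBall_self (by positivity))
        rw [← mul_assoc]
        gcongr
        exact fracKernel_le_ofReal_rpow_mul_fracKernel hδ hst h_ne
          (mem_closedBall_zero_iff.1 hh.1) hR1
    _ ≤ _ := by
        rw [lintegral_const_mul' _ _ ENNReal.ofReal_ne_top]
        gcongr
        exact setLIntegral_shell_le μ hf ht hR

lemma setLIntegral_closedBall_fracKernel_mul_le [Nontrivial E]
    (hf : ∀ h, f h ≤ 2 * f ((2⁻¹ : ℝ) • h)) {s t δ R : ℝ} (hδ : 0 < δ)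
    (hst : δ ≤ t - s) (ht : t < 1) (hR : 0 ≤ R) (hR1 : R ≤ 1) :
    ∫⁻ h in closedBall 0 R, fracKernel s h * f h ∂μ ≤ ENNReal.ofReal (R ^ δ * (1 - 2 ^ (-δ))⁻¹) *
      (ENNReal.ofReal (1 - t) * ∫⁻ h, fracKernel t h * f h ∂μ) := by
  set J : ℝ≥0∞ := ENNReal.ofReal (1 - t) * ∫⁻ h, fracKernel t h * f h ∂μ
  let shell : ℕ → Set E := fun j => closedBall 0 (R / 2 ^ j) \ closedBall 0 (R / 2 ^ j / 2)
  have hshell : ∀ j, ∫⁻ h in shell j, fracKernel s h * f h ∂μ ≤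
      ENNReal.ofReal (R ^ δ) * ENNReal.ofReal (2 ^ (-δ)) ^ j * J := fun j => by
    have hpow : ENNReal.ofReal ((R / 2 ^ j) ^ δ) =
        ENNReal.ofReal (R ^ δ) * ENNReal.ofReal (2 ^ (-δ)) ^ j := by
      rw [← ENNReal.ofReal_pow (by positivity), ← ENNReal.ofReal_mul (by positivity),
        Real.div_rpow hR (by positivity), Real.rpow_neg two_pos.le, inv_pow,
        Real.rpow_pow_comm two_pos.le, div_eq_mul_inv]
    exact hpow ▸ setLIntegral_shell_le_ofReal_rpow_mul μ hf hδ.le hst ht (by positivity)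
      ((div_le_self hR (one_le_pow₀ one_le_two)).trans hR1)
  have hq : (2 : ℝ) ^ (-δ) < 1 := Real.rpow_lt_one_of_one_lt_of_neg one_lt_two (neg_neg_of_pos hδ)
  calc ∫⁻ h in closedBall 0 R, fracKernel s h * f h ∂μ
      = ∫⁻ h in closedBall 0 R \ {0}, fracKernel s h * f h ∂μ :=
        (setLIntegral_congr (sdiff_null_ae_eq_self (measure_singleton _))).symm
    _ ≤ ∑' j, ∫⁻ h in shell j, fracKernel s h * f h ∂μ :=
        (lintegral_mono_set (closedBall_sdiff_zero_subset_iUnion_shell R)).trans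
          (lintegral_iUnion_le _ _)
    _ ≤ ∑' j : ℕ, ENNReal.ofReal (R ^ δ) * ENNReal.ofReal (2 ^ (-δ)) ^ j * J :=
        ENNReal.tsum_le_tsum hshell
    _ = _ := by
        rw [ENNReal.tsum_mul_right, ENNReal.tsum_mul_left, ENNReal.tsum_geometric,
          ENNReal.ofReal_mul (by positivity), ENNReal.ofReal_inv_of_pos (sub_pos.2 hq),
          ENNReal.ofReal_sub _ (by positivity), ENNReal.ofReal_one]

lemma lintegral_fracKernel_mul_le [Nontrivial E]
    (hf : ∀ h, f h ≤ 2 * f ((2⁻¹ : ℝ) • h)) {M : ℝ≥0∞} (hM : ∀ h, f h ≤ M)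
    {s t δ R : ℝ} (hs : 0 < s) (hδ : 0 < δ) (hst : δ ≤ t - s) (ht : t < 1) (hR : 0 < R)
    (hR1 : R ≤ 1) :
    ∫⁻ h, fracKernel s h * f h ∂μ ≤
      ENNReal.ofReal (R ^ δ * (1 - 2 ^ (-δ))⁻¹) *
        (ENNReal.ofReal (1 - t) * ∫⁻ h, fracKernel t h * f h ∂μ) +
      ENNReal.ofReal (finrank ℝ E * μ.real (ball 0 1) / s * R ^ (-s)) * M := by
  rw [← lintegral_add_compl _ (measurableSet_closedBall (x := (0 : E)) (ε := R))]
  refine add_le_add (setLIntegral_closedBall_fracKernel_mul_le μ hf hδ hst ht hR.le hR1) ?_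
  calc ∫⁻ h in (closedBall 0 R)ᶜ, fracKernel s h * f h ∂μ
      ≤ ∫⁻ h in (ball 0 R)ᶜ, fracKernel s h * M ∂μ :=
        lintegral_mono' (Measure.restrict_mono_set _ (compl_subset_compl.2 ball_subset_closedBall))
          fun h => by gcongr; exact hM h
    _ = _ := by
        rw [lintegral_mul_const _ (measurable_fracKernel s),
          setLIntegral_compl_ball_fracKernel μ hs hR]

end HalfDoubling

section TranslationDefect

/-- The measure of the part of `A` that the translation by `h` moves out of `A`. Slicing the double
integral over `A × Aᶜ` along the differences `y - x = h` expresses perimeters through it. -/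
noncomputable def translationDefect {G : Type*} [Add G] [MeasurableSpace G] (μ : Measure G)
    (A : Set G) (h : G) : ℝ≥0∞ :=
  μ (A \ (· + h) ⁻¹' A)

lemma translationDefect_le_measure {G : Type*} [Add G] [MeasurableSpace G] (μ : Measure G)
    (A : Set G) (h : G) : translationDefect μ A h ≤ μ A :=
  measure_mono sdiff_subset

section Group

variable {G : Type*} [AddCommGroup G] [MeasurableSpace G] [MeasurableAdd₂ G] (μ : Measure G)
  {A : Set G}

lemma measurable_indicator_compl_add (hA : MeasurableSet A) :
    Measurable fun p : G × G => Aᶜ.indicator (1 : G → ℝ≥0∞) (p.1 + p.2) :=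
  (measurable_one.indicator hA.compl).comp measurable_add

lemma translationDefect_eq_lintegral (hA : MeasurableSet A) (h : G) :
    translationDefect μ A h = ∫⁻ x in A, Aᶜ.indicator 1 (x + h) ∂μ := by
  have hpre : MeasurableSet ((· + h) ⁻¹' Aᶜ) := measurable_add_const h hA.compl
  change _ = ∫⁻ x in A, ((· + h) ⁻¹' Aᶜ).indicator 1 x ∂μ
  rw [lintegral_indicator_one hpre, Measure.restrict_apply hpre, inter_comm]
  rfl

variable [μ.IsAddLeftInvariant]

lemma translationDefect_add_le (A : Set G) (h k : G) :
    translationDefect μ A (h + k) ≤ translationDefect μ A h + translationDefect μ A k := by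
  have hsub : A \ (· + (h + k)) ⁻¹' A ⊆
      (A \ (· + h) ⁻¹' A) ∪ (· + h) ⁻¹' (A \ (· + k) ⁻¹' A) := fun x hx => by
    by_cases hxh : x + h ∈ A
    · exact .inr ⟨hxh, fun hxk => hx.2 (by simpa only [mem_preimage, add_assoc] using hxk)⟩
    · exact .inl ⟨hx.1, hxh⟩
  calc translationDefect μ A (h + k)
      ≤ μ (A \ (· + h) ⁻¹' A) + μ ((· + h) ⁻¹' (A \ (· + k) ⁻¹' A)) :=
        (measure_mono hsub).trans (measure_union_le _ _)
    _ = translationDefect μ A h + translationDefect μ A k := by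
        rw [measure_preimage_add_right]; rfl

lemma translationDefect_le_two_mul_half_smul [Module ℝ G] (A : Set G) (h : G) :
    translationDefect μ A h ≤ 2 * translationDefect μ A ((2⁻¹ : ℝ) • h) := by
  have hh : h = (2⁻¹ : ℝ) • h + (2⁻¹ : ℝ) • h := by rw [← add_smul]; norm_num
  nth_rw 1 [hh, two_mul]
  exact translationDefect_add_le μ A _ _

variable [SFinite μ]

lemma lintegral_lintegral_compl_eq_lintegral_mul_translationDefect (hA : MeasurableSet A)
    {k : G → ℝ≥0∞} (hk : Measurable k) :
    ∫⁻ x in A, ∫⁻ y in Aᶜ, k (y - x) ∂μ ∂μ = ∫⁻ h, k h * translationDefect μ A h ∂μ := by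
  calc ∫⁻ x in A, ∫⁻ y in Aᶜ, k (y - x) ∂μ ∂μ
      = ∫⁻ x in A, ∫⁻ h, k h * Aᶜ.indicator 1 (x + h) ∂μ ∂μ := by
        refine lintegral_congr fun x => ?_
        rw [← lintegral_indicator hA.compl, ← lintegral_add_left_eq_self _ x]
        refine lintegral_congr fun h => ?_
        by_cases hh : x + h ∈ A <;> simp [hh]
    _ = ∫⁻ h, ∫⁻ x in A, k h * Aᶜ.indicator 1 (x + h) ∂μ ∂μ :=
        lintegral_lintegral_swap
          ((hk.comp measurable_snd).mul (measurable_indicator_compl_add hA)).aemeasurable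
    _ = ∫⁻ h, k h * translationDefect μ A h ∂μ := by
        refine lintegral_congr fun h => ?_
        have hslice : Measurable fun x => Aᶜ.indicator (1 : G → ℝ≥0∞) (x + h) :=
          (measurable_indicator_compl_add hA).comp measurable_prodMk_right
        rw [lintegral_const_mul _ hslice, translationDefect_eq_lintegral μ hA]

lemma measure_mul_sub_le_setLIntegral_translationDefect (hA : MeasurableSet A) (S : Set G) :
    μ A * (μ S - μ A) ≤ ∫⁻ h in S, translationDefect μ A h ∂μ := by
  have inner_ge : ∀ x, μ S - μ A ≤ ∫⁻ h in S, Aᶜ.indicator 1 (x + h) ∂μ := fun x => by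
    have hpre : MeasurableSet ((x + ·) ⁻¹' Aᶜ) := measurable_const_add x hA.compl
    calc μ S - μ A = μ S - μ ((x + ·) ⁻¹' A) := by rw [measure_preimage_add]
      _ ≤ μ (S \ (x + ·) ⁻¹' A) := le_measure_sdiff
      _ = ∫⁻ h in S, ((x + ·) ⁻¹' Aᶜ).indicator 1 h ∂μ := by
          rw [lintegral_indicator_one hpre, Measure.restrict_apply hpre, inter_comm]
          rfl
  calc μ A * (μ S - μ A) = ∫⁻ _ in A, (μ S - μ A) ∂μ := by rw [setLIntegral_const, mul_comm]
    _ ≤ ∫⁻ x in A, ∫⁻ h in S, Aᶜ.indicator 1 (x + h) ∂μ ∂μ := lintegral_mono inner_ge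
    _ = ∫⁻ h in S, ∫⁻ x in A, Aᶜ.indicator 1 (x + h) ∂μ ∂μ :=
        lintegral_lintegral_swap (measurable_indicator_compl_add hA).aemeasurable
    _ = ∫⁻ h in S, translationDefect μ A h ∂μ := by
        simp only [translationDefect_eq_lintegral μ hA]

end Group

section NormedSpace

lemma measureReal_ball_pos {X : Type*} [PseudoMetricSpace X] [ProperSpace X] [MeasurableSpace X]
    (μ : Measure X) [μ.IsOpenPosMeasure] [IsFiniteMeasureOnCompacts μ] (x : X) {r : ℝ}
    (hr : 0 < r) : 0 < μ.real (ball x r) :=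
  ENNReal.toReal_pos (measure_ball_pos μ x hr).ne' measure_ball_lt_top.ne

variable {E : Type*} [NormedAddCommGroup E] [NormedSpace ℝ E] [FiniteDimensional ℝ E]
  [MeasurableSpace E] [BorelSpace E] (μ : Measure E) [μ.IsAddHaarMeasure]

lemma exists_pos_measure_smul_eq_ofReal [Nontrivial E] {A : Set E} (hA : 0 < μ.real A) {v : ℝ}
    (hv : 0 < v) :
    ∃ c : ℝ, 0 < c ∧ c ^ finrank ℝ E = v / μ.real A ∧ μ (c • A) = ENNReal.ofReal v := by
  have hpow := Real.rpow_inv_natCast_pow (div_pos hv hA).le (finrank_pos (R := ℝ) (M := E)).ne'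
  refine ⟨_, by positivity, hpow, ?_⟩
  have hfin : μ A ≠ ⊤ := fun htop => by simp [measureReal_def, htop] at hA
  rw [Measure.addHaar_smul_of_nonneg μ (by positivity), hpow, ← ofReal_measureReal hfin,
    ← ENNReal.ofReal_mul (by positivity), div_mul_cancel₀ _ hA.ne']

lemma translationDefect_ball_one_le [Nontrivial E] (h : E) :
    translationDefect μ (ball 0 1) h ≤
      ENNReal.ofReal (finrank ℝ E * μ.real (ball (0 : E) 1) * ‖h‖) := by
  have hd : (1 : ℝ) ≤ finrank ℝ E := mod_cast finrank_pos (R := ℝ) (M := E)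
  rcases le_or_gt 1 ‖h‖ with hh | hh
  · grw [translationDefect_le_measure, ← ofReal_measureReal measure_ball_lt_top.ne]
    refine ENNReal.ofReal_le_ofReal ?_
    nlinarith [mul_le_mul hd hh zero_le_one (by positivity),
      measureReal_nonneg (μ := μ) (s := ball (0 : E) 1)]
  have hsub : ball 0 1 \ (· + h) ⁻¹' ball 0 1 ⊆ ball (0 : E) 1 \ ball 0 (1 - ‖h‖) :=
    fun x hx => ⟨hx.1, fun hx' => hx.2 <| by
      rw [mem_ball_zero_iff] at hx'
      rw [mem_preimage, mem_ball_zero_iff]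
      linarith [norm_add_le x h]⟩
  have bernoulli : 1 - finrank ℝ E * ‖h‖ ≤ (1 - ‖h‖) ^ finrank ℝ E := by
    simpa only [mul_neg, ← sub_eq_add_neg] using
      one_add_mul_le_pow (a := -‖h‖) (by linarith) (finrank ℝ E)
  calc translationDefect μ (ball 0 1) h ≤ μ (ball (0 : E) 1 \ ball 0 (1 - ‖h‖)) :=
        measure_mono hsub
    _ = ENNReal.ofReal (μ.real (ball (0 : E) 1) -
          (1 - ‖h‖) ^ finrank ℝ E * μ.real (ball (0 : E) 1)) := by
        rw [measure_sdiff (ball_subset_ball (sub_le_self _ (norm_nonneg h)))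
          measurableSet_ball.nullMeasurableSet measure_ball_lt_top.ne,
          Measure.addHaar_ball_of_pos μ 0 (sub_pos.2 hh),
          ← ofReal_measureReal (s := ball 0 1) measure_ball_lt_top.ne,
          ← ENNReal.ofReal_mul (pow_nonneg (sub_pos.2 hh).le _),
          ← ENNReal.ofReal_sub _ (by positivity)]
    _ ≤ _ := by
        refine ENNReal.ofReal_le_ofReal ?_
        nlinarith [measureReal_nonneg (μ := μ) (s := ball (0 : E) 1)]

end NormedSpace

end TranslationDefect

section PerimeterBounds

variable {E : Type*} [NormedAddCommGroup E] [NormedSpace ℝ E] [FiniteDimensional ℝ E] [Nontrivial E]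
  [MeasurableSpace E] [BorelSpace E] (μ : Measure E) [μ.IsAddHaarMeasure]

lemma measure_closedBall_le_two_mul_measure_shell {R : ℝ} (hR : 0 ≤ R) :
    μ (closedBall (0 : E) R) ≤ 2 * μ (closedBall (0 : E) R \ closedBall 0 (R / 2)) := by
  have hfin : μ (closedBall (0 : E) (R / 2)) ≠ ⊤ := measure_closedBall_lt_top.ne
  have hsplit : μ (closedBall (0 : E) R) = μ (closedBall (0 : E) (R / 2)) +
      μ (closedBall (0 : E) R \ closedBall 0 (R / 2)) := by
    rw [measure_add_sdiff measurableSet_closedBall.nullMeasurableSet,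
      union_eq_right.2 (closedBall_subset_closedBall (half_le_self hR))]
  have hdouble : 2 * μ (closedBall (0 : E) (R / 2)) ≤ μ (closedBall (0 : E) R) := by
    have htwo : (2 : ℝ≥0∞) ≤ 2 ^ finrank ℝ E := le_self_pow₀ one_le_two finrank_pos.ne'
    grw [htwo]
    rw [← ENNReal.ofReal_ofNat 2, ← ENNReal.ofReal_pow two_pos.le,
      ← Measure.addHaar_closedBall_mul μ 0 two_pos.le (by positivity),
      mul_div_cancel₀ _ two_ne_zero]
  rw [two_mul, hsplit, ENNReal.add_le_add_iff_left hfin] at hdouble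
  rw [hsplit, two_mul]
  gcongr

-- Every point of `A` is moved out of `A` by at least half of a shell of measure `2 * μ A`.
lemma ofReal_rpow_mul_measure_sq_le {A : Set E} (hA : MeasurableSet A) (hμA : μ A ≠ ⊤)
    {t R : ℝ} (ht₀ : 0 ≤ t) (ht₁ : t < 1) (hR : 0 < R) (hAR : 4 * μ A ≤ μ (closedBall 0 R)) :
    ENNReal.ofReal (R ^ (-((finrank ℝ E : ℝ) + t))) * μ A ^ 2 ≤
      ENNReal.ofReal (1 - t) * ∫⁻ h, fracKernel t h * translationDefect μ A h ∂μ := by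
  set S : Set E := closedBall 0 R \ closedBall 0 (R / 2)
  have hS : 2 * μ A ≤ μ S := by
    rw [← ENNReal.mul_le_mul_iff_right two_ne_zero ENNReal.ofNat_ne_top, ← mul_assoc]
    norm_num
    exact hAR.trans (measure_closedBall_le_two_mul_measure_shell μ hR.le)
  have hdefect : μ A ^ 2 ≤ ∫⁻ h in S, translationDefect μ A h ∂μ :=
    calc μ A ^ 2 = μ A * (2 * μ A - μ A) := by
          rw [two_mul, ENNReal.add_sub_cancel_right hμA, sq]
      _ ≤ μ A * (μ S - μ A) := by gcongr
      _ ≤ _ := measure_mul_sub_le_setLIntegral_translationDefect μ hA S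
  calc ENNReal.ofReal (R ^ (-((finrank ℝ E : ℝ) + t))) * μ A ^ 2
      ≤ ∫⁻ h in S, ENNReal.ofReal (R ^ (-((finrank ℝ E : ℝ) + t))) *
          translationDefect μ A h ∂μ := by
        rw [lintegral_const_mul' _ _ ENNReal.ofReal_ne_top]
        gcongr
    _ ≤ ∫⁻ h in S, fracKernel t h * translationDefect μ A h ∂μ := by
        refine setLIntegral_mono' (measurableSet_closedBall.diff measurableSet_closedBall)
          fun h hh => ?_
        gcongr
        refine ofReal_rpow_le_fracKernel ht₀ ?_ (mem_closedBall_zero_iff.1 hh.1)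
        rintro rfl
        exact hh.2 (mem_closedBall_self (by positivity))
    _ ≤ _ := setLIntegral_shell_le μ (translationDefect_le_two_mul_half_smul μ A) ht₁ hR.le

lemma exists_pos_forall_isoperimetric :
    ∃ c : ℝ, 0 < c ∧ ∀ t : ℝ, 0 ≤ t → t < 1 → ∀ A : Set E, MeasurableSet A → 0 < μ.real A →
      ENNReal.ofReal (c * μ.real A ^ (1 - t / finrank ℝ E)) ≤
        ENNReal.ofReal (1 - t) * ∫⁻ h, fracKernel t h * translationDefect μ A h ∂μ := by
  set w : ℝ := μ.real (ball (0 : E) 1) / 4 with hw_def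
  have hw : 0 < w := div_pos (measureReal_ball_pos μ 0 one_pos) four_pos
  refine ⟨min 1 w ^ 2, by positivity, fun t ht₀ ht₁ A hA hv => ?_⟩
  have hfin : μ A ≠ ⊤ := fun htop => by simp [measureReal_def, htop] at hv
  obtain ⟨R, hR, hwR⟩ : ∃ R, 0 < R ∧ w * R ^ finrank ℝ E = μ.real A := by
    refine ⟨(μ.real A / w) ^ (finrank ℝ E : ℝ)⁻¹, by positivity, ?_⟩
    rw [Real.rpow_inv_natCast_pow (div_pos hv hw).le finrank_pos.ne', mul_div_cancel₀ _ hw.ne']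
  have hAR : 4 * μ A = μ (closedBall 0 R) := by
    rw [Measure.addHaar_closedBall μ 0 hR.le, ← ofReal_measureReal hfin, ← hwR,
      ← ofReal_measureReal (s := ball (0 : E) 1) measure_ball_lt_top.ne,
      ← ENNReal.ofReal_ofNat 4, ← ENNReal.ofReal_mul (by positivity),
      ← ENNReal.ofReal_mul (by positivity), hw_def]
    ring_nf
  calc _ ≤ ENNReal.ofReal (R ^ (-((finrank ℝ E : ℝ) + t)) * μ.real A ^ 2) :=
        ENNReal.ofReal_le_ofReal <| by
          simpa only [hwR] using
            min_one_sq_mul_rpow_le (finrank_pos (R := ℝ) (M := E)) hw hR ht₀ ht₁.le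
    _ = ENNReal.ofReal (R ^ (-((finrank ℝ E : ℝ) + t))) * μ A ^ 2 := by
        rw [ENNReal.ofReal_mul (by positivity), ENNReal.ofReal_pow hv.le, ofReal_measureReal hfin]
    _ ≤ _ := ofReal_rpow_mul_measure_sq_le μ hA hfin ht₀ ht₁ hR hAR.le

lemma ofReal_one_sub_mul_lintegral_ball_one_le {t : ℝ} (ht₀ : 0 < t) (ht₁ : t < 1) {ω κ : ℝ}
    (hω : ω = μ.real (ball (0 : E) 1)) (hκ : κ = finrank ℝ E * ω) :
    ENNReal.ofReal (1 - t) * ∫⁻ h, fracKernel t h * translationDefect μ (ball 0 1) h ∂μ ≤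
      ENNReal.ofReal (κ * κ + κ / t * ω) := by
  have hω₀ : 0 ≤ ω := hω ▸ measureReal_nonneg
  have hκ₀ : 0 ≤ κ := by rw [hκ]; positivity
  have near : ENNReal.ofReal (1 - t) *
      ∫⁻ h in closedBall 0 1, fracKernel t h * translationDefect μ (ball 0 1) h ∂μ ≤
        ENNReal.ofReal (κ * κ) :=
    calc _ ≤ ENNReal.ofReal (1 - t) *
          ∫⁻ h in closedBall 0 1, ENNReal.ofReal κ * fracKernel (t - 1) h ∂μ := by
          refine mul_le_mul_right (lintegral_mono fun h => ?_) _
          grw [translationDefect_ball_one_le, ← hω, ← hκ, ENNReal.ofReal_mul hκ₀, mul_left_comm,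
            fracKernel_mul_ofReal_norm_le]
      _ = ENNReal.ofReal (κ * κ) := by
          rw [lintegral_const_mul' _ _ ENNReal.ofReal_ne_top, mul_left_comm,
            ofReal_one_sub_mul_setLIntegral_closedBall_fracKernel μ ht₁ zero_le_one, ← hω, ← hκ,
            ← ENNReal.ofReal_mul hκ₀, Real.one_rpow, mul_one]
  have far : ENNReal.ofReal (1 - t) *
      ∫⁻ h in (closedBall 0 1)ᶜ, fracKernel t h * translationDefect μ (ball 0 1) h ∂μ ≤
        ENNReal.ofReal (κ / t * ω) :=
    calc _ ≤ 1 * ∫⁻ h in (ball 0 1)ᶜ, fracKernel t h * μ (ball 0 1) ∂μ := by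
          refine mul_le_mul' (ENNReal.ofReal_le_one.2 (by linarith)) ?_
          refine lintegral_mono' (Measure.restrict_mono_set _
            (compl_subset_compl.2 ball_subset_closedBall)) fun h => ?_
          exact mul_le_mul_right (translationDefect_le_measure μ _ h) _
      _ = ENNReal.ofReal (κ / t * ω) := by
          rw [lintegral_mul_const _ (measurable_fracKernel t),
            setLIntegral_compl_ball_fracKernel μ ht₀ one_pos, one_mul, Real.one_rpow, mul_one,
            ← hω, ← hκ, ENNReal.ofReal_mul (by positivity), hω,
            ofReal_measureReal measure_ball_lt_top.ne]
  rw [← lintegral_add_compl _ (measurableSet_closedBall (x := (0 : E)) (ε := 1)), mul_add,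
    ENNReal.ofReal_add (by positivity) (by positivity)]
  exact add_le_add near far

end PerimeterBounds

section FractionalPerimeter

variable {N : ℕ} {A B : Set (EuclideanSpace ℝ (Fin N))}

lemma interEnergy_eq_lintegral_fracKernel (α : ℝ) (A B : Set (EuclideanSpace ℝ (Fin N))) :
    interEnergy N α A B = ∫⁻ x in A, ∫⁻ y in B, fracKernel α (y - x) := by
  simp only [interEnergy, fracKernel, finrank_euclideanSpace_fin, norm_sub_rev]

lemma fracPer_eq_lintegral_translationDefect (α : ℝ) (hA : MeasurableSet A) :
    fracPer N α A = ∫⁻ h, fracKernel α h * translationDefect volume A h := by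
  rw [fracPer, interEnergy_eq_lintegral_fracKernel,
    lintegral_lintegral_compl_eq_lintegral_mul_translationDefect volume hA
      (measurable_fracKernel α)]

lemma fracPer_smul {c : ℝ} (hc : 0 < c) (α : ℝ) (A : Set (EuclideanSpace ℝ (Fin N))) :
    fracPer N α (c • A) = ENNReal.ofReal (c ^ ((N : ℝ) - α)) * fracPer N α A := by
  have hconst : ENNReal.ofReal (c ^ N) * (ENNReal.ofReal (c ^ N) *
      ENNReal.ofReal (c ^ (-((N : ℝ) + α)))) = ENNReal.ofReal (c ^ ((N : ℝ) - α)) := by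
    rw [← ENNReal.ofReal_mul (by positivity), ← ENNReal.ofReal_mul (by positivity),
      ← Real.rpow_natCast, ← Real.rpow_add hc, ← Real.rpow_add hc]
    ring_nf
  have hcompl : (c • A)ᶜ = c • Aᶜ := (image_compl_eq (MulAction.bijective₀ hc.ne')).symm
  simp only [fracPer, interEnergy_eq_lintegral_fracKernel, hcompl,
    setLIntegral_smul_set volume hc, ← smul_sub, fracKernel_smul hc,
    lintegral_const_mul' _ _ ENNReal.ofReal_ne_top, finrank_euclideanSpace_fin]
  rw [← hconst]
  ring

lemma interEnergy_comm (α : ℝ) (A B : Set (EuclideanSpace ℝ (Fin N))) :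
    interEnergy N α A B = interEnergy N α B A := by
  have hmeas : Measurable (Function.uncurry fun x y : EuclideanSpace ℝ (Fin N) =>
      ENNReal.ofReal (‖x - y‖ ^ (-((N : ℝ) + α)))) := by
    unfold Function.uncurry
    fun_prop
  rw [interEnergy, lintegral_lintegral_swap hmeas.aemeasurable]
  simp only [interEnergy, norm_sub_rev]

lemma interEnergy_union_left (α : ℝ) (hB : MeasurableSet B) (hAB : Disjoint A B)
    (C : Set (EuclideanSpace ℝ (Fin N))) :
    interEnergy N α (A ∪ B) C = interEnergy N α A C + interEnergy N α B C :=
  lintegral_union hB hAB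

lemma fracPer_eq_interEnergy_add (α : ℝ) (hB : MeasurableSet B) (hAB : Disjoint A B) :
    fracPer N α A = interEnergy N α A (A ∪ B)ᶜ + interEnergy N α A B := by
  have hcompl : (A ∪ B)ᶜ ∪ B = Aᶜ := by
    rw [compl_union, inter_union_distrib_right, compl_union_self, inter_univ,
      union_eq_left.2 hAB.subset_compl_left]
  have hdisj : Disjoint (A ∪ B)ᶜ B :=
    disjoint_compl_left.mono_right subset_union_right
  rw [fracPer, ← hcompl, interEnergy_comm, interEnergy_union_left α hB hdisj,
    interEnergy_comm, interEnergy_comm α B]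

lemma fracPer_add_fracPer (α : ℝ) (hA : MeasurableSet A) (hB : MeasurableSet B)
    (hAB : Disjoint A B) :
    fracPer N α A + fracPer N α B = fracPer N α (A ∪ B) + 2 * interEnergy N α A B := by
  rw [fracPer_eq_interEnergy_add α hB hAB, fracPer_eq_interEnergy_add α hA hAB.symm, union_comm B,
    fracPer, interEnergy_union_left α hB hAB, interEnergy_comm α B A]
  ring

lemma interEnergy_le_of_subset_compl_ball [NeZero N] {t r : ℝ} (ht : 0 < t)
    (x₀ : EuclideanSpace ℝ (Fin N)) (hA : A ⊆ ball x₀ r) (hB : B ⊆ (ball x₀ r)ᶜ) :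
    interEnergy N t A B ≤
      ENNReal.ofReal (N * volume.real (ball (0 : EuclideanSpace ℝ (Fin N)) 1) / t) *
        ∫⁻ x in A, ENNReal.ofReal ((r - dist x x₀) ^ (-t)) := by
  rw [interEnergy_eq_lintegral_fracKernel, ← lintegral_const_mul' _ _ ENNReal.ofReal_ne_top]
  refine setLIntegral_mono (by fun_prop) fun x hx => ?_
  have hsub : B ⊆ (· - x) ⁻¹' (ball 0 (r - dist x x₀))ᶜ := fun y hy => by
    have hyr : r ≤ dist y x₀ := not_lt.1 (hB hy)
    rw [mem_preimage, mem_compl_iff, mem_ball_zero_iff, not_lt, ← dist_eq_norm]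
    linarith [dist_triangle y x x₀]
  calc ∫⁻ y in B, fracKernel t (y - x)
      ≤ ∫⁻ y in (· - x) ⁻¹' (ball 0 (r - dist x x₀))ᶜ, fracKernel t (y - x) :=
        lintegral_mono_set hsub
    _ = ∫⁻ h in (ball (0 : EuclideanSpace ℝ (Fin N)) (r - dist x x₀))ᶜ, fracKernel t h :=
        (measurePreserving_sub_right volume x).setLIntegral_comp_preimage
          measurableSet_ball.compl (measurable_fracKernel t)
    _ = _ := by
        rw [setLIntegral_compl_ball_fracKernel volume ht (sub_pos.2 (hA hx)),
          finrank_euclideanSpace_fin, ENNReal.ofReal_mul (by positivity)]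

lemma exists_pos_forall_ofReal_mul_fracPer_le (N : ℕ) [NeZero N] {δ : ℝ} (hδ : 0 < δ) :
    ∃ K : ℝ, 0 < K ∧ ∀ s t : ℝ, 0 < s → t < 1 → δ ≤ t - s →
      ∀ A : Set (EuclideanSpace ℝ (Fin N)), MeasurableSet A →
        ENNReal.ofReal s * fracPer N s A ≤
          ENNReal.ofReal (1 / 4) * (ENNReal.ofReal (1 - t) * fracPer N t A) +
            ENNReal.ofReal K * volume A := by
  set ω : ℝ := volume.real (ball (0 : EuclideanSpace ℝ (Fin N)) 1)
  have hω : 0 < ω := measureReal_ball_pos volume 0 one_pos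
  have hN : (0 : ℝ) < N := mod_cast NeZero.pos N
  have hq : (2 : ℝ) ^ (-δ) < 1 := Real.rpow_lt_one_of_one_lt_of_neg one_lt_two (neg_neg_of_pos hδ)
  obtain ⟨R, hR, hR1, hRδ⟩ := exists_pos_le_one_forall_rpow_le hδ
    (ε := (1 - 2 ^ (-δ)) / 4) (by linarith)
  refine ⟨N * ω * R⁻¹, by positivity, fun s t hs ht hst A hA => ?_⟩
  have hs1 : s ≤ 1 := by linarith
  have hcoef : s * (R ^ δ * (1 - 2 ^ (-δ))⁻¹) ≤ 1 / 4 := by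
    refine (mul_le_of_le_one_left (by positivity) hs1).trans ?_
    rw [← div_eq_mul_inv, div_le_iff₀ (sub_pos.2 hq)]
    linarith [hRδ δ le_rfl]
  have htail : s * (N * ω / s * R ^ (-s)) ≤ N * ω * R⁻¹ := by
    rw [← mul_assoc, mul_div_cancel₀ _ hs.ne', ← Real.rpow_neg_one]
    gcongr _ * ?_
    exact Real.rpow_le_rpow_of_exponent_ge hR hR1 (neg_le_neg hs1)
  have hbound := lintegral_fracKernel_mul_le volume
    (translationDefect_le_two_mul_half_smul volume A)
    (translationDefect_le_measure volume A) hs hδ hst ht hR hR1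
  rw [← fracPer_eq_lintegral_translationDefect s hA, ← fracPer_eq_lintegral_translationDefect t hA,
    finrank_euclideanSpace_fin] at hbound
  grw [hbound]
  rw [mul_add, ← mul_assoc (ENNReal.ofReal s), ← mul_assoc (ENNReal.ofReal s),
    ← ENNReal.ofReal_mul hs.le, ← ENNReal.ofReal_mul hs.le]
  gcongr

lemma exists_pos_forall_mul_toReal_fracPer_le (N : ℕ) [NeZero N] {δ : ℝ} (hδ : 0 < δ) :
    ∃ K : ℝ, 0 < K ∧ ∀ s t : ℝ, 0 < s → t < 1 → δ ≤ t - s →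
      ∀ A : Set (EuclideanSpace ℝ (Fin N)), MeasurableSet A → volume A ≠ ⊤ → fracPer N t A ≠ ⊤ →
        fracPer N s A ≠ ⊤ ∧ s * (fracPer N s A).toReal ≤
          1 / 4 * ((1 - t) * (fracPer N t A).toReal) + K * volume.real A := by
  obtain ⟨K, hK, hbound⟩ := exists_pos_forall_ofReal_mul_fracPer_le N hδ
  refine ⟨K, hK, fun s t hs ht hst A hA hvol hper => ?_⟩
  have hfin : ENNReal.ofReal s * fracPer N s A ≠ ⊤ :=
    ne_top_of_le_ne_top (by finiteness) (hbound s t hs ht hst A hA)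
  refine ⟨(ENNReal.lt_top_of_mul_ne_top_right hfin (ENNReal.ofReal_pos.2 hs).ne').ne, ?_⟩
  have hreal := ENNReal.toReal_mono (by finiteness) (hbound s t hs ht hst A hA)
  rwa [ENNReal.toReal_add (by finiteness) (by finiteness), ENNReal.toReal_mul, ENNReal.toReal_mul,
    ENNReal.toReal_mul, ENNReal.toReal_mul, ENNReal.toReal_ofReal hs.le,
    ENNReal.toReal_ofReal (by norm_num), ENNReal.toReal_ofReal (sub_pos.2 ht).le,
    ENNReal.toReal_ofReal hK.le] at hreal

lemma exists_measure_eq_forall_ofReal_one_sub_mul_fracPer_le (N : ℕ) [NeZero N] {δ m : ℝ}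
    (hδ : 0 < δ) (hm : 0 < m) :
    ∃ (A : Set (EuclideanSpace ℝ (Fin N))) (C : ℝ), MeasurableSet A ∧
      volume A = ENNReal.ofReal m ∧ 0 < C ∧
      ∀ t, δ ≤ t → t < 1 → ENNReal.ofReal (1 - t) * fracPer N t A ≤ ENNReal.ofReal C := by
  set ω : ℝ := volume.real (ball (0 : EuclideanSpace ℝ (Fin N)) 1) with hω_def
  have hω : 0 < ω := measureReal_ball_pos volume 0 one_pos
  have hN : (1 : ℝ) ≤ N := mod_cast NeZero.one_le
  obtain ⟨c, hc, -, hcv⟩ := exists_pos_measure_smul_eq_ofReal volume hω hm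
  refine ⟨c • ball 0 1, max 1 c ^ (N : ℝ) * ((N * ω) * (N * ω) + (N * ω) / δ * ω),
    measurableSet_ball.const_smul_of_ne_zero hc.ne', hcv, by positivity, fun t hδt ht => ?_⟩
  have hscale : c ^ ((N : ℝ) - t) ≤ max 1 c ^ (N : ℝ) :=
    calc c ^ ((N : ℝ) - t) ≤ max 1 c ^ ((N : ℝ) - t) :=
          Real.rpow_le_rpow hc.le (le_max_right _ _) (by linarith)
      _ ≤ max 1 c ^ (N : ℝ) :=
          Real.rpow_le_rpow_of_exponent_le (le_max_left _ _) (by linarith)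
  have hball := ofReal_one_sub_mul_lintegral_ball_one_le volume (hδ.trans_le hδt) ht hω_def rfl
  rw [← fracPer_eq_lintegral_translationDefect t measurableSet_ball,
    finrank_euclideanSpace_fin] at hball
  rw [fracPer_smul hc, mul_left_comm]
  grw [hball, hscale, hδt, ← ENNReal.ofReal_mul (by positivity)]

end FractionalPerimeter

section Minimizers

variable {N : ℕ} {s t m : ℝ}

lemma toReal_fracPer_add_toReal_fracPer (α : ℝ) {A B : Set (EuclideanSpace ℝ (Fin N))}
    (hA : MeasurableSet A) (hB : MeasurableSet B) (hAB : Disjoint A B)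
    (hPA : fracPer N α A ≠ ⊤) (hPB : fracPer N α B ≠ ⊤) :
    (fracPer N α A).toReal + (fracPer N α B).toReal =
      (fracPer N α (A ∪ B)).toReal + 2 * (interEnergy N α A B).toReal := by
  have hsum := fracPer_add_fracPer α hA hB hAB
  obtain ⟨hunion, hinter⟩ := ENNReal.add_ne_top.1 (hsum ▸ ENNReal.add_ne_top.2 ⟨hPA, hPB⟩)
  rw [← ENNReal.toReal_add hPA hPB, hsum, ENNReal.toReal_add hunion hinter, ENNReal.toReal_mul,
    ENNReal.toReal_ofNat]

lemma exists_pos_forall_isMinimizer_mul_fracPer_le (N : ℕ) [NeZero N] {δ m : ℝ} (hδ : 0 < δ)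
    (hm : 0 < m) :
    ∃ C : ℝ, 0 < C ∧ ∀ s t : ℝ, 0 < s → t < 1 → δ ≤ t - s →
      ∀ F : Set (EuclideanSpace ℝ (Fin N)), IsMinimizer N s t m F →
        (1 - t) * (fracPer N t F).toReal ≤ C := by
  obtain ⟨K, hK, hinterp⟩ := exists_pos_forall_mul_toReal_fracPer_le N hδ
  obtain ⟨A, C, hA, hAm, hC, hAper⟩ :=
    exists_measure_eq_forall_ofReal_one_sub_mul_fracPer_le N hδ hm
  refine ⟨2 * (C + K * m), by positivity, fun s t hs ht hst F ⟨hF, hFm, hFt, hFmin⟩ => ?_⟩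
  have ht' : 0 < 1 - t := sub_pos.2 ht
  have hAt := hAper t (by linarith) ht
  have hAfin : fracPer N t A ≠ ⊤ :=
    (ENNReal.lt_top_of_mul_ne_top_right (ne_top_of_le_ne_top ENNReal.ofReal_ne_top hAt)
      (ENNReal.ofReal_pos.2 ht').ne').ne
  have hAreal : (1 - t) * (fracPer N t A).toReal ≤ C := by
    simpa [ENNReal.toReal_mul, ht'.le, hC.le] using ENNReal.toReal_mono ENNReal.ofReal_ne_top hAt
  have hcomp := hFmin A hA hAm hAfin.lt_top
  have hFs := (hinterp s t hs ht hst F hF (hFm ▸ ENNReal.ofReal_ne_top) hFt.ne).2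
  rw [measureReal_def, hFm, ENNReal.toReal_ofReal hm.le] at hFs
  unfold freeEnergy at hcomp
  have hAs_nonneg : 0 ≤ s * (fracPer N s A).toReal := by positivity
  have hKm : 0 < K * m := by positivity
  linarith

-- The competitor is the dilation of `E` with volume `m`.
lemma IsMinimizer.freeEnergy_le_of_volume_le [NeZero N] {E F : Set (EuclideanSpace ℝ (Fin N))}
    (hF : IsMinimizer N s t m F) (hs₀ : 0 ≤ s) (hs₁ : s ≤ 1) (ht₀ : 0 ≤ t) (ht₁ : t ≤ 1)
    (hE : MeasurableSet E) (hE₀ : 0 < volume.real E) (hEm : volume.real E ≤ m)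
    (hEt : fracPer N t E ≠ ⊤) :
    freeEnergy N s t F ≤ m / volume.real E * ((1 - t) * (fracPer N t E).toReal) -
      s * (fracPer N s E).toReal := by
  obtain ⟨c, hc, hcN, hvol⟩ := exists_pos_measure_smul_eq_ofReal volume hE₀ (hE₀.trans_le hEm)
  rw [finrank_euclideanSpace_fin] at hcN
  have hN : (1 : ℝ) ≤ N := mod_cast NeZero.one_le
  have hc1 : 1 ≤ c := by
    rw [← one_le_pow_iff_of_nonneg hc.le (NeZero.ne N), hcN]
    exact (one_le_div hE₀).2 hEm
  have hct : c ^ ((N : ℝ) - t) ≤ m / volume.real E := by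
    rw [← hcN, ← Real.rpow_natCast]
    exact Real.rpow_le_rpow_of_exponent_le hc1 (by linarith)
  have hcs : 1 ≤ c ^ ((N : ℝ) - s) := Real.one_le_rpow hc1 (by linarith)
  calc freeEnergy N s t F ≤ freeEnergy N s t (c • E) :=
        hF.2.2.2 _ (hE.const_smul_of_ne_zero hc.ne') hvol (by rw [fracPer_smul hc]; finiteness)
    _ = c ^ ((N : ℝ) - t) * ((1 - t) * (fracPer N t E).toReal) -
        c ^ ((N : ℝ) - s) * (s * (fracPer N s E).toReal) := by
        simp only [freeEnergy, fracPer_smul hc, ENNReal.toReal_mul,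
          ENNReal.toReal_ofReal (Real.rpow_nonneg hc.le _)]
        ring
    _ ≤ _ := by
        refine sub_le_sub (mul_le_mul_of_nonneg_right hct ?_)
          (le_mul_of_one_le_left (by positivity) hcs)
        exact mul_nonneg (sub_nonneg.2 ht₁) ENNReal.toReal_nonneg

lemma IsMinimizer.mul_toReal_fracPer_le [NeZero N] {A E : Set (EuclideanSpace ℝ (Fin N))}
    (hF : IsMinimizer N s t m (A ∪ E)) (hm : 0 < m) (hs₀ : 0 ≤ s) (hs₁ : s ≤ 1) (ht₀ : 0 ≤ t)
    (ht₁ : t ≤ 1) (hA : MeasurableSet A) (hE : MeasurableSet E) (hAE : Disjoint A E)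
    (hAm : 2 * volume.real A ≤ m) (hAt : fracPer N t A ≠ ⊤) (hEt : fracPer N t E ≠ ⊤)
    (hAs : fracPer N s A ≠ ⊤) (hEs : fracPer N s E ≠ ⊤) :
    (1 - t) * (fracPer N t A).toReal ≤
      4 * ((1 - t) * (interEnergy N t A E).toReal) + s * (fracPer N s A).toReal +
        2 * volume.real A / m * ((1 - t) * (fracPer N t (A ∪ E)).toReal) := by
  have hfin : volume (A ∪ E) ≠ ⊤ := hF.2.1 ▸ ENNReal.ofReal_ne_top
  have hvol : volume.real A + volume.real E = m := by
    rw [← measureReal_union hAE hE (measure_ne_top_of_subset subset_union_left hfin)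
      (measure_ne_top_of_subset subset_union_right hfin), measureReal_def, hF.2.1,
      ENNReal.toReal_ofReal hm.le]
  have hA₀ : 0 ≤ volume.real A := measureReal_nonneg
  have hcomp := hF.freeEnergy_le_of_volume_le hs₀ hs₁ ht₀ ht₁ hE (by linarith) (by linarith) hEt
  have hratio := div_sub_le_one_add_two_mul_div hm hA₀ hAm
  rw [← eq_sub_of_add_eq' hvol] at hratio
  have hsplit_t := toReal_fracPer_add_toReal_fracPer t hA hE hAE hAt hEt
  have hsplit_s := toReal_fracPer_add_toReal_fracPer s hA hE hAE hAs hEs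
  set θ := 2 * volume.real A / m
  have hθ₀ : 0 ≤ θ := by positivity
  have hθ₁ : θ ≤ 1 := (div_le_one hm).2 hAm
  have ht' : 0 ≤ 1 - t := sub_nonneg.2 ht₁
  have hEper : (1 - t) * (fracPer N t E).toReal ≤
      (1 - t) * (fracPer N t (A ∪ E)).toReal + 2 * ((1 - t) * (interEnergy N t A E).toReal) := by
    have : 0 ≤ (fracPer N t A).toReal := ENNReal.toReal_nonneg
    nlinarith
  have hI_t : 0 ≤ (1 - t) * (interEnergy N t A E).toReal := by positivity
  have hI_s : 0 ≤ s * (interEnergy N s A E).toReal := by positivity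
  have hscaled : m / volume.real E * ((1 - t) * (fracPer N t E).toReal) ≤
      (1 - t) * (fracPer N t E).toReal + θ * ((1 - t) * (fracPer N t (A ∪ E)).toReal) +
        2 * ((1 - t) * (interEnergy N t A E).toReal) := by
    have hθE := mul_le_mul_of_nonneg_left hEper hθ₀
    have hθI := mul_le_of_le_one_left hI_t hθ₁
    grw [hratio]
    linarith
  unfold freeEnergy at hcomp
  linear_combination hcomp + hscaled + 2 * hI_s + (1 - t) * hsplit_t - s * hsplit_s

lemma exists_pos_forall_isMinimizer_fracPer_inter_le (N : ℕ) [NeZero N] {δ m : ℝ} (hδ : 0 < δ)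
    (hm : 0 < m) :
    ∃ Λ : ℝ, 0 < Λ ∧ ∀ s t : ℝ, 0 < s → t < 1 → δ ≤ t - s →
      ∀ F : Set (EuclideanSpace ℝ (Fin N)), IsMinimizer N s t m F →
        ∀ B : Set (EuclideanSpace ℝ (Fin N)), MeasurableSet B → 2 * volume.real (F ∩ B) ≤ m →
          ENNReal.ofReal (1 - t) * fracPer N t (F ∩ B) ≤
            ENNReal.ofReal (6 * (1 - t)) * interEnergy N t (F ∩ B) (F \ B) +
              ENNReal.ofReal (Λ * volume.real (F ∩ B)) := by
  obtain ⟨K, hK, hinterp⟩ := exists_pos_forall_mul_toReal_fracPer_le N hδ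
  obtain ⟨C, hC, hper⟩ := exists_pos_forall_isMinimizer_mul_fracPer_le N hδ hm
  refine ⟨2 * (K + 2 * C / m), by positivity, fun s t hs ht hst F hF B hB hvol => ?_⟩
  have ht' : 0 < 1 - t := sub_pos.2 ht
  obtain hI | hI := eq_or_ne (interEnergy N t (F ∩ B) (F \ B)) ⊤
  · simp [hI, ENNReal.mul_top, ht]
  have hA : MeasurableSet (F ∩ B) := hF.1.inter hB
  have hE : MeasurableSet (F \ B) := hF.1.diff hB
  have hfin : volume F ≠ ⊤ := hF.2.1 ▸ ENNReal.ofReal_ne_top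
  have hsplit := fracPer_add_fracPer t hA hE disjoint_sdiff_inter.symm
  rw [inter_union_sdiff] at hsplit
  have hFt : fracPer N t F ≠ ⊤ := hF.2.2.1.ne
  obtain ⟨hAt, hEt⟩ := ENNReal.add_ne_top.1 (hsplit.trans_ne (by finiteness))
  obtain ⟨hAs, hAinterp⟩ := hinterp s t hs ht hst _ hA
    (measure_ne_top_of_subset inter_subset_left hfin) hAt
  have hEs := (hinterp s t hs ht hst _ hE (measure_ne_top_of_subset sdiff_subset hfin) hEt).1
  have hmin := IsMinimizer.mul_toReal_fracPer_le (by rwa [inter_union_sdiff]) hm hs.le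
    (by linarith) (by linarith) ht.le hA hE disjoint_sdiff_inter.symm hvol hAt hEt hAs hEs
  rw [inter_union_sdiff] at hmin
  grw [hper s t hs ht hst F hF, hAinterp] at hmin
  rw [← ENNReal.ofReal_toReal hAt, ← ENNReal.ofReal_toReal hI, ← ENNReal.ofReal_mul ht'.le,
    ← ENNReal.ofReal_mul (by positivity), ← ENNReal.ofReal_add (by positivity) (by positivity)]
  gcongr ENNReal.ofReal ?_
  have hI₀ : 0 ≤ (1 - t) * (interEnergy N t (F ∩ B) (F \ B)).toReal := by positivity
  have hv₀ : 0 ≤ (K + 2 * C / m) * volume.real (F ∩ B) := by positivity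
  linear_combination (4 / 3) * hmin + (2 / 3) * hI₀ + (2 / 3) * hv₀

lemma exists_pos_forall_isMinimizer_rpow_le_interEnergy (N : ℕ) [NeZero N] {δ : ℝ} (hδ : 0 < δ) :
    ∃ M : ℝ, 0 < M ∧ ∀ m : ℝ, 0 < m → ∃ v₀ : ℝ, 0 < v₀ ∧
      ∀ s t : ℝ, 0 < s → t < 1 → δ ≤ t - s →
        ∀ F : Set (EuclideanSpace ℝ (Fin N)), IsMinimizer N s t m F →
          ∀ B : Set (EuclideanSpace ℝ (Fin N)), MeasurableSet B →
            0 < volume.real (F ∩ B) → volume.real (F ∩ B) ≤ v₀ →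
              ENNReal.ofReal (volume.real (F ∩ B) ^ (1 - t / N)) ≤
                ENNReal.ofReal M * (ENNReal.ofReal (1 - t) * interEnergy N t (F ∩ B) (F \ B)) := by
  have hN : (0 : ℝ) < N := mod_cast NeZero.pos N
  obtain ⟨c, hc, hisop⟩ :=
    exists_pos_forall_isoperimetric (volume : Measure (EuclideanSpace ℝ (Fin N)))
  refine ⟨2 / c * 6, by positivity, fun m hm => ?_⟩
  obtain ⟨Λ, hΛ, hquasi⟩ := exists_pos_forall_isMinimizer_fracPer_inter_le N hδ hm
  obtain ⟨v₀, hv₀, habsorb⟩ := exists_pos_forall_mul_le_mul_rpow (div_pos hδ hN) hΛ (half_pos hc)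
  refine ⟨min v₀ (m / 2), by positivity, fun s t hs ht hst F hF B hB hpos hvol => ?_⟩
  have ht₀ : 0 < t := by linarith
  have hA : MeasurableSet (F ∩ B) := hF.1.inter hB
  have hlower := hisop t ht₀.le ht _ hA hpos
  rw [← fracPer_eq_lintegral_translationDefect t hA, finrank_euclideanSpace_fin] at hlower
  grw [hquasi s t hs ht hst F hF B hB (by linarith [hvol.trans (min_le_right _ _)]),
    habsorb (t / N) (by gcongr; linarith) _ hpos (hvol.trans (min_le_left _ _))] at hlower
  set V := volume.real (F ∩ B) ^ (1 - t / N)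
  have hV : 0 ≤ V := by positivity
  rw [← add_halves (c * V), ENNReal.ofReal_add (by positivity) (by positivity),
    ← div_mul_eq_mul_div] at hlower
  calc ENNReal.ofReal V = ENNReal.ofReal (2 / c) * ENNReal.ofReal (c / 2 * V) := by
        rw [← ENNReal.ofReal_mul (by positivity)]
        congr 1
        field_simp
    _ ≤ ENNReal.ofReal (2 / c) *
        (ENNReal.ofReal (6 * (1 - t)) * interEnergy N t (F ∩ B) (F \ B)) := by
        gcongr
        exact ENNReal.le_of_add_le_add_right ENNReal.ofReal_ne_top hlower
    _ = _ := by
        rw [ENNReal.ofReal_mul (by norm_num), ENNReal.ofReal_mul (by positivity)]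
        ring

lemma exists_pos_forall_measureReal_ball_le (N : ℕ) [NeZero N] {v : ℝ} (hv : 0 < v) :
    ∃ r₀ : ℝ, 0 < r₀ ∧ ∀ (x₀ : EuclideanSpace ℝ (Fin N)) (r : ℝ), r ≤ r₀ →
      volume.real (ball x₀ r) ≤ v := by
  obtain ⟨c, hc, -, hvol⟩ := exists_pos_measure_smul_eq_ofReal volume
    (measureReal_ball_pos volume (0 : EuclideanSpace ℝ (Fin N)) one_pos) hv
  rw [_root_.smul_ball hc.ne', smul_zero, mul_one, Real.norm_of_nonneg hc.le] at hvol
  refine ⟨c, hc, fun x₀ r hr => ?_⟩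
  calc volume.real (ball x₀ r) ≤ volume.real (ball x₀ c) :=
        measureReal_mono (ball_subset_ball hr)
    _ = volume.real (ball (0 : EuclideanSpace ℝ (Fin N)) c) := by
        simp only [measureReal_def, Measure.addHaar_ball_center]
    _ = v := by rw [measureReal_def, hvol, ENNReal.toReal_ofReal hv.le]

lemma exists_pos_forall_isMinimizer_rpow_le_lintegral (N : ℕ) [NeZero N] {δ : ℝ} (hδ : 0 < δ) :
    ∃ M : ℝ, 0 < M ∧ ∀ m : ℝ, 0 < m → ∃ r₀ : ℝ, 0 < r₀ ∧
      ∀ s t : ℝ, 0 < s → t < 1 → δ ≤ t - s →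
        ∀ F : Set (EuclideanSpace ℝ (Fin N)), IsMinimizer N s t m F →
          ∀ (x₀ : EuclideanSpace ℝ (Fin N)) (ρ : ℝ), ρ ≤ r₀ →
            0 < volume.real (F ∩ ball x₀ ρ) →
              ENNReal.ofReal (volume.real (F ∩ ball x₀ ρ) ^ (1 - t / N)) ≤
                ENNReal.ofReal M * (ENNReal.ofReal (1 - t) *
                  ∫⁻ x in F ∩ ball x₀ ρ, ENNReal.ofReal ((ρ - dist x x₀) ^ (-t))) := by
  set ω : ℝ := volume.real (ball (0 : EuclideanSpace ℝ (Fin N)) 1)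
  have hω : 0 < ω := measureReal_ball_pos volume 0 one_pos
  have hN : (0 : ℝ) < N := mod_cast NeZero.pos N
  obtain ⟨M, hM, hinter⟩ := exists_pos_forall_isMinimizer_rpow_le_interEnergy N hδ
  refine ⟨M * (N * ω / δ), by positivity, fun m hm => ?_⟩
  obtain ⟨v₀, hv₀, hinter⟩ := hinter m hm
  obtain ⟨r₀, hr₀, hball⟩ := exists_pos_forall_measureReal_ball_le N hv₀
  refine ⟨r₀, hr₀, fun s t hs ht hst F hF x₀ ρ hρ hpos => ?_⟩
  have hδt : δ ≤ t := by linarith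
  have hconst : N * ω / t ≤ N * ω / δ := by gcongr
  have hsmall : volume.real (F ∩ ball x₀ ρ) ≤ v₀ :=
    (measureReal_mono inter_subset_right).trans (hball x₀ ρ hρ)
  grw [hinter s t hs ht hst F hF _ measurableSet_ball hpos hsmall,
    interEnergy_le_of_subset_compl_ball (hδ.trans_le hδt) x₀ inter_subset_right
      (fun x hx => hx.2), hconst]
  rw [ENNReal.ofReal_mul hM.le]
  exact le_of_eq (by ring)

lemma exists_pos_forall_isMinimizer_sub_mul_rpow_le (N : ℕ) [NeZero N] {δ : ℝ} (hδ : 0 < δ) :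
    ∃ M : ℝ, 0 < M ∧ ∀ m : ℝ, 0 < m → ∃ r₀ : ℝ, 0 < r₀ ∧
      ∀ s t : ℝ, 0 < s → t < 1 → δ ≤ t - s →
        ∀ F : Set (EuclideanSpace ℝ (Fin N)), IsMinimizer N s t m F →
          ∀ (x₀ : EuclideanSpace ℝ (Fin N)) (a b : ℝ), 0 ≤ a → a ≤ b → b ≤ r₀ →
            0 < volume.real (F ∩ ball x₀ a) →
              (b - a) * volume.real (F ∩ ball x₀ a) ^ (1 - t / N) ≤
                M * b ^ (1 - t) * volume.real (F ∩ ball x₀ b) := by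
  obtain ⟨M, hM, hslice⟩ := exists_pos_forall_isMinimizer_rpow_le_lintegral N hδ
  refine ⟨M, hM, fun m hm => ?_⟩
  obtain ⟨r₀, hr₀, hslice⟩ := hslice m hm
  refine ⟨r₀, hr₀, fun s t hs ht hst F hF x₀ a b ha hab hb hpos => ?_⟩
  have hN : (1 : ℝ) ≤ N := mod_cast NeZero.one_le
  have hexp : 0 ≤ 1 - t / N := sub_nonneg.2 ((div_le_one (by positivity)).2 (by linarith))
  have hb₀ : 0 ≤ b := ha.trans hab
  have hfin : volume (F ∩ ball x₀ b) ≠ ⊤ :=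
    measure_ne_top_of_subset inter_subset_right (by finiteness)
  have hint := ofReal_sub_mul_le_of_forall_le_lintegral_ball volume hM.le ht F x₀ hab
    (k := volume.real (F ∩ ball x₀ a) ^ (1 - t / N)) fun ρ hρ => by
      have hmono : volume.real (F ∩ ball x₀ a) ≤ volume.real (F ∩ ball x₀ ρ) :=
        measureReal_mono (inter_subset_inter_right F (ball_subset_ball hρ.1.le))
      grw [hmono, hslice s t hs ht hst F hF x₀ ρ (hρ.2.trans hb) (hpos.trans_le hmono)]
  rwa [← ofReal_measureReal hfin, ← ENNReal.ofReal_mul (by positivity),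
    ENNReal.ofReal_le_ofReal_iff (by positivity)] at hint

end Minimizers

theorem stmt10_general (N : ℕ) (hN : 0 < N) (δ₀ : ℝ) (hδ : 0 < δ₀) :
    ∃ c₀ : ℝ, 0 < c₀ ∧ ∀ m : ℝ, 0 < m → ∃ r₀ : ℝ, 0 < r₀ ∧
      ∀ s t : ℝ, 0 < s → t < 1 → δ₀ ≤ t - s →
        ∀ F : Set (EuclideanSpace ℝ (Fin N)), IsMinimizer N s t m F →
          ∀ x₀ : EuclideanSpace ℝ (Fin N), (∀ ρ, 0 < ρ → 0 < volume (F ∩ ball x₀ ρ)) →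
            ∀ r : ℝ, 0 < r → r < r₀ →
              ENNReal.ofReal (c₀ * r ^ N) ≤ volume (ball x₀ r ∩ F) := by
  have := NeZero.of_pos hN
  obtain ⟨M, hM, hgrowth⟩ := exists_pos_forall_isMinimizer_sub_mul_rpow_le N hδ
  obtain ⟨c₀, hc₀, hlower⟩ := exists_pos_forall_mul_pow_le_of_growth hN hδ hM
  refine ⟨c₀, hc₀, fun m hm => ?_⟩
  obtain ⟨r₀, hr₀, hgrowth⟩ := hgrowth m hm
  refine ⟨r₀, hr₀, fun s t hs ht hst F hF x₀ hx₀ r hr hrr₀ => ?_⟩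
  have hfin : ∀ ρ, volume (F ∩ ball x₀ ρ) ≠ ⊤ := fun ρ =>
    measure_ne_top_of_subset inter_subset_right (by finiteness)
  have hpos : ∀ ρ, 0 < ρ → 0 < volume.real (F ∩ ball x₀ ρ) := fun ρ hρ =>
    ENNReal.toReal_pos (hx₀ ρ hρ).ne' (hfin ρ)
  rw [inter_comm, ← ofReal_measureReal (hfin r)]
  refine ENNReal.ofReal_le_ofReal (hlower t (by linarith) ht r hr _
    (fun a b hab => measureReal_mono (inter_subset_inter_right F (ball_subset_ball hab)) (hfin b))
    (hpos _ (half_pos hr)) fun a b ha hab hb => ?_)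
  exact hgrowth s t hs ht hst F hF x₀ a b ha.le hab.le (hb.trans hrr₀.le) (hpos a ha)

theorem stmt10 (N : ℕ) (hN : 0 < N) (δ₀ : ℝ) (hδ : δ₀ ∈ Set.Ioo (0 : ℝ) 1) :
    ∃ c₀ : ℝ, 0 < c₀ ∧ ∀ m : ℝ, 0 < m → ∃ r₀ : ℝ, 0 < r₀ ∧
      ∀ s t : ℝ, 0 < s → s < t → t < 1 → δ₀ ≤ t - s →
        ∀ F : Set (EuclideanSpace ℝ (Fin N)), IsMinimizer N s t m F →
          ∀ x₀ ∈ mtBoundary N F, ∀ r : ℝ, 0 < r → r < r₀ →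
            ENNReal.ofReal (c₀ * r ^ N) ≤ volume (Metric.ball x₀ r ∩ F) := by
  obtain ⟨c₀, hc₀, h⟩ := stmt10_general N hN δ₀ hδ.1
  exact ⟨c₀, hc₀, fun m hm => (h m hm).imp fun r₀ ⟨hr₀, h⟩ =>
    ⟨hr₀, fun s t hs _ ht hst F hF x₀ hx₀ => h s t hs ht hst F hF x₀ fun ρ hρ => (hx₀ ρ hρ).1⟩⟩
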